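/- arXiv:2504.12615 — 7 statements merged into one kernel-verified Lean document; each statement's English description precedes it below -/
import Mathlib

section
/- (Identifiability) Let λ_1,…,λ_p and λ'_1,…,λ'_p be positive reals each satisfying λ_{a+1} = λ_{p−a+1} for 1 ≤ a ≤ ⌊(p−1)/2⌋ and ∏_{k=1}^p λ_k = 1 = ∏_{k=1}^p λ'_k, and let α, α' ∈ (0,∞)^p. If D_α (Q D_λ Q*) D_α = D_{α'} (Q D_{λ'} Q*) D_{α'}, then α = α' and λ = λ'. -/
open Matrix Complex

/-!
All entries of `Q` have the same modulus, so `Q D_λ Qᴴ` has constant diagonal. The diagonal of `Σ`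
therefore determines `α` up to a common factor `c > 0`; the remaining entries then determine
`Q D_λ Qᴴ`, and hence `λ` since `Q` is invertible, up to the factor `c²`. The normalization of
`∏ λ` forces `c = 1`.
-/

section Identifiability

variable {m n 𝕜 : Type*} [RCLike 𝕜] [Fintype n]

theorem eq_one_of_prod_smul_eq_prod [Nonempty n] {c : ℝ} (hc : 0 ≤ c) {d : n → 𝕜}
    (hd : ∏ k, d k ≠ 0) (h : ∏ k, (c • d) k = ∏ k, d k) : c = 1 := by
  have hpow : (c : 𝕜) ^ Fintype.card n = 1 := by
    refine mul_right_cancel₀ hd ?_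
    simpa only [Pi.smul_apply, RCLike.real_smul_eq_coe_mul, Finset.prod_mul_distrib,
      Finset.prod_const, Finset.card_univ, one_mul] using h
  exact (pow_eq_one_iff_of_nonneg hc Fintype.card_ne_zero).1 (mod_cast hpow)

variable [DecidableEq n]

theorem mul_diagonal_mul_conjTranspose_apply_self (Q : Matrix m n 𝕜) (d : n → 𝕜) (i : m) :
    (Q * diagonal d * Qᴴ) i i = ∑ k, (‖Q i k‖ : 𝕜) ^ 2 * d k := by
  rw [mul_apply]
  refine Finset.sum_congr rfl fun k _ => ?_
  rw [mul_diagonal, conjTranspose_apply, mul_right_comm, ← starRingEnd_apply, RCLike.mul_conj]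

theorem mul_diagonal_mul_conjTranspose_injective {R : Type*} [Semiring R] [StarRing R]
    {Q : Matrix n n R} (hQ : IsUnit Q) :
    Function.Injective fun d : n → R => Q * diagonal d * Qᴴ := fun _ _ h =>
  diagonal_injective (hQ.mul_left_cancel (hQ.star.mul_right_cancel h))

theorem exists_eq_smul_of_diagonal_mul_mul_diagonal_eq [Nonempty n] {M M' : Matrix n n 𝕜}
    {s s' : 𝕜} (hM : ∀ i, M i i = s) (hM' : ∀ i, M' i i = s') (hs : s ≠ 0)
    {α α' : n → ℝ} (hα : ∀ i, 0 < α i) (hα' : ∀ i, 0 < α' i)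
    (h : diagonal (fun i => (α i : 𝕜)) * M * diagonal (fun i => (α i : 𝕜)) =
      diagonal (fun i => (α' i : 𝕜)) * M' * diagonal (fun i => (α' i : 𝕜))) :
    ∃ c : ℝ, 0 < c ∧ α = c • α' ∧ M' = c ^ 2 • M := by
  have hentry (i j : n) : (α i : 𝕜) * M i j * α j = α' i * M' i j * α' j := by
    simpa only [mul_diagonal, diagonal_mul] using congrFun₂ h i j
  have hdiag (i : n) : (α i : 𝕜) ^ 2 * s = (α' i : 𝕜) ^ 2 * s' := by
    rw [← hM i, ← hM' i]
    linear_combination hentry i i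
  have hratio (i j : n) : α i * α' j = α j * α' i := by
    have hsq : (α i * α' j) ^ 2 = (α j * α' i) ^ 2 := by
      have : ((α i : 𝕜) * α' j) ^ 2 = ((α j : 𝕜) * α' i) ^ 2 :=
        mul_right_cancel₀ hs
          (by linear_combination (α' j : 𝕜) ^ 2 * hdiag i - (α' i : 𝕜) ^ 2 * hdiag j)
      exact_mod_cast this
    exact (pow_left_inj₀ (mul_pos (hα i) (hα' j)).le (mul_pos (hα j) (hα' i)).le two_ne_zero).1 hsq
  obtain ⟨i₀⟩ := ‹Nonempty n›
  have hscale (i : n) : α i = α i₀ / α' i₀ * α' i := by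
    rw [div_mul_eq_mul_div, eq_div_iff (hα' i₀).ne', hratio]
  refine ⟨α i₀ / α' i₀, div_pos (hα i₀) (hα' i₀), funext hscale, ?_⟩
  ext i j
  have hne (k : n) : (α' k : 𝕜) ≠ 0 := RCLike.ofReal_ne_zero.2 (hα' k).ne'
  refine mul_left_cancel₀ (hne i) (mul_right_cancel₀ (hne j) ((hentry i j).symm.trans ?_))
  rw [hscale i, hscale j, Matrix.smul_apply, RCLike.real_smul_eq_coe_mul]
  push_cast
  ring

theorem stmt_5_general {Q : Matrix n n 𝕜} (hQ : IsUnit Q) {r : ℝ} (hr : ∀ i k, ‖Q i k‖ = r)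
    {α α' : n → ℝ} (hα : ∀ i, 0 < α i) (hα' : ∀ i, 0 < α' i)
    {d d' : n → 𝕜} (hsum : ∑ k, d k ≠ 0) (hd : ∏ k, d k ≠ 0) (hprod : ∏ k, d' k = ∏ k, d k)
    (h : diagonal (fun i => (α i : 𝕜)) * (Q * diagonal d * Qᴴ) * diagonal (fun i => (α i : 𝕜)) =
      diagonal (fun i => (α' i : 𝕜)) * (Q * diagonal d' * Qᴴ) *
        diagonal (fun i => (α' i : 𝕜))) :
    α = α' ∧ d = d' := by
  have : Nonempty n := by
    by_contra hn
    simp [not_nonempty_iff.1 hn] at hsum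
  have hr0 : r ≠ 0 := by
    rintro rfl
    exact hQ.ne_zero (Matrix.ext fun i k => norm_eq_zero.1 (hr i k))
  have hdiag (d : n → 𝕜) (i : n) : (Q * diagonal d * Qᴴ) i i = (r : 𝕜) ^ 2 * ∑ k, d k := by
    simp only [mul_diagonal_mul_conjTranspose_apply_self, hr, Finset.mul_sum]
  obtain ⟨c, hc, hαc, hM⟩ := exists_eq_smul_of_diagonal_mul_mul_diagonal_eq (hdiag d) (hdiag d')
    (mul_ne_zero (pow_ne_zero 2 (RCLike.ofReal_ne_zero.2 hr0)) hsum) hα hα' h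
  have hdc : d' = c ^ 2 • d := mul_diagonal_mul_conjTranspose_injective hQ <| by
    simpa only [diagonal_smul, mul_smul_comm, smul_mul_assoc] using hM
  have hc_one : c = 1 := by
    have hsq : c ^ 2 = 1 :=
      eq_one_of_prod_smul_eq_prod (sq_nonneg c) hd (by simpa only [hdc] using hprod)
    exact (pow_eq_one_iff_of_nonneg hc.le two_ne_zero).1 hsq
  subst hc_one
  exact ⟨by rw [hαc, one_smul], by rw [hdc, one_pow, one_smul]⟩

end Identifiability

section RootsOfUnity

variable {K : Type*} {n : ℕ} {ω c : K} {Q : Matrix (Fin n) (Fin n) K}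

theorem isUnit_of_apply_eq_pow_div [Field K] (hω : IsPrimitiveRoot ω n) (hc : c ≠ 0)
    (hQ : ∀ j k : Fin n, Q j k = ω ^ ((j : ℕ) * (k : ℕ)) / c) : IsUnit Q := by
  have hQV : Q = c⁻¹ • vandermonde (fun j : Fin n => ω ^ (j : ℕ)) := by
    ext j k
    rw [hQ, Matrix.smul_apply, vandermonde_apply, ← pow_mul, smul_eq_mul, div_eq_inv_mul]
  rw [isUnit_iff_isUnit_det, isUnit_iff_ne_zero, hQV, det_smul]
  exact mul_ne_zero (pow_ne_zero _ (inv_ne_zero hc)) <|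
    det_vandermonde_ne_zero_iff.2 fun i j hij => Fin.ext (hω.pow_inj i.2 j.2 hij)

theorem norm_apply_eq_of_apply_eq_pow_div [NormedDivisionRing K] (hω : ‖ω‖ = 1)
    (hQ : ∀ j k : Fin n, Q j k = ω ^ ((j : ℕ) * (k : ℕ)) / c) (j k : Fin n) :
    ‖Q j k‖ = ‖c‖⁻¹ := by
  rw [hQ, norm_div, norm_pow, hω, one_pow, one_div]

end RootsOfUnity

/-- Identifiability: under the reality condition `λ_{a+1} = λ_{p-a+1}` (0-based:
`λ_a = λ_{p-a}`) and the normalization `∏_k λ_k = 1`, the parameters `α` and `λ`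
are identifiable from `Σ = D_α (Q D_λ Qᴴ) D_α`. -/
theorem stmt_5 (p : ℕ) (hp : 2 ≤ p)
    (ω : ℂ) (hω : ω = Complex.exp (2 * Real.pi * Complex.I / p))
    (Q : Matrix (Fin p) (Fin p) ℂ)
    (hQ : ∀ j k : Fin p, Q j k = ω ^ ((j : ℕ) * (k : ℕ)) / Real.sqrt p)
    (lam lam' : Fin p → ℝ) (hlam : ∀ k, 0 < lam k) (hlam' : ∀ k, 0 < lam' k)
    (hsym : ∀ (a : ℕ) (ha : 1 ≤ a) (ha' : a ≤ (p - 1) / 2),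
      lam ⟨a, by omega⟩ = lam ⟨p - a, by omega⟩)
    (hsym' : ∀ (a : ℕ) (ha : 1 ≤ a) (ha' : a ≤ (p - 1) / 2),
      lam' ⟨a, by omega⟩ = lam' ⟨p - a, by omega⟩)
    (hprod : ∏ k : Fin p, lam k = 1) (hprod' : ∏ k : Fin p, lam' k = 1)
    (α α' : Fin p → ℝ) (hα : ∀ i, 0 < α i) (hα' : ∀ i, 0 < α' i)
    (heq :
      Matrix.diagonal (fun i => (α i : ℂ)) *
          (Q * Matrix.diagonal (fun k => (lam k : ℂ)) * Qᴴ) *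
          Matrix.diagonal (fun i => (α i : ℂ)) =
        Matrix.diagonal (fun i => (α' i : ℂ)) *
          (Q * Matrix.diagonal (fun k => (lam' k : ℂ)) * Qᴴ) *
          Matrix.diagonal (fun i => (α' i : ℂ))) :
    α = α' ∧ lam = lam' := by
  have hp0 : p ≠ 0 := by omega
  have : NeZero p := ⟨hp0⟩
  have hroot : IsPrimitiveRoot ω p := hω ▸ isPrimitiveRoot_exp p hp0
  have hsqrt : (√p : ℂ) ≠ 0 := by simpa using hp0
  have hsum : (∑ k, (lam k : ℂ)) ≠ 0 :=
    mod_cast (Finset.sum_pos (fun k _ => hlam k) Finset.univ_nonempty).ne'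
  have hprod_ne : ∏ k, (lam k : ℂ) ≠ 0 := by simp [← ofReal_prod, hprod]
  have hprod_eq : ∏ k, (lam' k : ℂ) = ∏ k, (lam k : ℂ) := mod_cast hprod'.trans hprod.symm
  exact (stmt_5_general (isUnit_of_apply_eq_pow_div hroot hsqrt hQ)
    (norm_apply_eq_of_apply_eq_pow_div (hroot.norm'_eq_one hp0) hQ) hα hα' hsum hprod_ne hprod_eq
    heq).imp_right fun h => ofReal_injective.comp_left h
end

section
/- The Hadamard product of R = Q D_λ Q* and its inverse diagonalizes in the Fourier basis: R ∘ R^{−1} = Q diag(μ_1,…,μ_p) Q*; equivalently, r_{ij} r^{ij} = ∑_{m=1}^p q_{im} q̄_{jm} μ_m for all i,j, where r_{ij}, r^{ij} are the entries of R and R^{−1}. -/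
open Matrix Complex

/-!
Every entry of `Q diag(a) Qᴴ` is a Fourier transform of `a`: the rows of `Q` are normalized
characters, so the `(i, j)` entry is `(∑ k, (χ i - χ j) k * a k) / |G|`. Entrywise multiplication of
such matrices therefore multiplies Fourier transforms, that is, convolves the diagonals. Since the
characters are orthogonal, `Q` is unitary and `R⁻¹ = Q diag(λ⁻¹) Qᴴ` is again of this form.
-/

theorem mul_diagonal_mul_conjTranspose_apply {m n α : Type*} [Fintype n] [DecidableEq n]
    [CommSemiring α] [StarRing α] (Q : Matrix m n α) (a : n → α) (i j : m) :
    (Q * diagonal a * Qᴴ) i j = ∑ k, Q i k * star (Q j k) * a k := by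
  rw [mul_apply]
  refine Finset.sum_congr rfl fun k _ => ?_
  rw [mul_diagonal, conjTranspose_apply, mul_right_comm]

theorem inv_mul_mul_conjTranspose_of_mem_unitaryGroup {n α : Type*} [Fintype n] [DecidableEq n]
    [CommRing α] [StarRing α] {Q : Matrix n n α} (hQ : Q ∈ unitaryGroup n α) (A : Matrix n n α) :
    (Q * A * Qᴴ)⁻¹ = Q * A⁻¹ * Qᴴ := by
  have hQ_inv : Q⁻¹ = Qᴴ := inv_eq_right_inv (mem_unitaryGroup_iff.mp hQ)
  have hQH_inv : (Qᴴ)⁻¹ = Q := inv_eq_right_inv (mem_unitaryGroup_iff'.mp hQ)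
  rw [Matrix.mul_inv_rev, Matrix.mul_inv_rev, hQ_inv, hQH_inv, Matrix.mul_assoc]

theorem inv_diagonal_of_ne_zero {n K : Type*} [Fintype n] [DecidableEq n] [Field K]
    {a : n → K} (ha : ∀ k, a k ≠ 0) : (diagonal a)⁻¹ = diagonal a⁻¹ := by
  refine inv_eq_right_inv ?_
  simp [diagonal_mul_diagonal, ha]

/-- The convolution of two functions on a finite additive structure. On the cyclic group
of order `p` the sum defining its value at `m` runs over the paper's index set `S_m`. -/
def addConv {G R : Type*} [Add G] [Fintype G] [DecidableEq G] [NonUnitalNonAssocSemiring R]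
    (a b : G → R) (m : G) : R :=
  ∑ kl : G × G with kl.1 + kl.2 = m, a kl.1 * b kl.2

theorem sum_addChar_mul_sum_addChar {G R : Type*} [AddMonoid G] [Fintype G] [DecidableEq G]
    [CommSemiring R] (ψ : AddChar G R) (a b : G → R) :
    (∑ k, ψ k * a k) * (∑ l, ψ l * b l) = ∑ m, ψ m * addConv a b m := by
  calc (∑ k, ψ k * a k) * (∑ l, ψ l * b l)
      = ∑ kl : G × G, ψ (kl.1 + kl.2) * (a kl.1 * b kl.2) := by
        simp only [Fintype.sum_mul_sum, Fintype.sum_prod_type, AddChar.map_add_eq_mul,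
          mul_mul_mul_comm]
    _ = ∑ m, ∑ kl : G × G with kl.1 + kl.2 = m, ψ (kl.1 + kl.2) * (a kl.1 * b kl.2) :=
        (Finset.sum_fiberwise _ _ _).symm
    _ = ∑ m, ψ m * addConv a b m := by
        refine Finset.sum_congr rfl fun m _ => ?_
        rw [addConv, Finset.mul_sum]
        refine Finset.sum_congr rfl fun kl hkl => ?_
        rw [(Finset.mem_filter.mp hkl).2]

section CharMatrix

variable {ι G 𝕜 : Type*} [RCLike 𝕜] [AddCommGroup G] [Fintype G]

/-- The normalized character table of a family of characters of a finite abelian group: the row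
of index `i` is `χ i / √|G|`. For the characters `k ↦ ω ^ (j * k)` of a cyclic group it is the
Fourier matrix. -/
noncomputable def charMatrix (χ : ι → AddChar G 𝕜) : Matrix ι G 𝕜 :=
  of fun i k => χ i k / (√(Fintype.card G : ℝ) : ℝ)

theorem charMatrix_mul_star (χ : ι → AddChar G 𝕜) (i j : ι) (k : G) :
    charMatrix χ i k * star (charMatrix χ j k) = (χ i - χ j) k / Fintype.card G := by
  have hsqrt : ((√(Fintype.card G : ℝ) : ℝ) : 𝕜) * (√(Fintype.card G : ℝ) : ℝ) =
      Fintype.card G := by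
    rw [← RCLike.ofReal_mul, Real.mul_self_sqrt (Nat.cast_nonneg _), RCLike.ofReal_natCast]
  rw [charMatrix, of_apply, of_apply, ← starRingEnd_apply, map_div₀, RCLike.conj_ofReal,
    div_mul_div_comm, hsqrt, AddChar.sub_apply, AddChar.map_neg_eq_conj]

variable [DecidableEq G]

theorem charMatrix_mul_diagonal_mul_conjTranspose_apply (χ : ι → AddChar G 𝕜) (a : G → 𝕜)
    (i j : ι) :
    (charMatrix χ * diagonal a * (charMatrix χ)ᴴ) i j =
      (∑ k, (χ i - χ j) k * a k) / Fintype.card G := by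
  simp only [mul_diagonal_mul_conjTranspose_apply, charMatrix_mul_star, Finset.sum_div,
    div_mul_eq_mul_div]

theorem hadamard_charMatrix_mul_diagonal (χ : ι → AddChar G 𝕜) (a b : G → 𝕜) :
    (charMatrix χ * diagonal a * (charMatrix χ)ᴴ) ⊙ (charMatrix χ * diagonal b * (charMatrix χ)ᴴ) =
      charMatrix χ * diagonal (fun m => addConv a b m / Fintype.card G) * (charMatrix χ)ᴴ := by
  ext i j
  rw [hadamard_apply]
  simp only [charMatrix_mul_diagonal_mul_conjTranspose_apply]
  rw [div_mul_div_comm, sum_addChar_mul_sum_addChar, ← div_div, Finset.sum_div]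
  simp only [mul_div_assoc]

theorem charMatrix_mem_unitaryGroup {χ : G → AddChar G 𝕜} (hχ : Function.Injective χ) :
    charMatrix χ ∈ unitaryGroup G 𝕜 := by
  classical
  rw [mem_unitaryGroup_iff, star_eq_conjTranspose]
  ext i j
  have hentry := charMatrix_mul_diagonal_mul_conjTranspose_apply χ 1 i j
  simp only [Pi.one_apply, mul_one, diagonal_one', AddChar.sum_eq_ite,
    sub_eq_zero, hχ.eq_iff] at hentry
  rw [hentry, one_apply]
  split_ifs <;> simp

theorem stmt_8_general {χ : G → AddChar G 𝕜} (hχ : Function.Injective χ)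
    {lam : G → 𝕜} (hlam : ∀ k, lam k ≠ 0)
    {R : Matrix G G 𝕜} (hR : R = charMatrix χ * diagonal lam * (charMatrix χ)ᴴ)
    {μ : G → 𝕜} (hμ : ∀ m, μ m = addConv lam lam⁻¹ m / Fintype.card G) :
    R ⊙ R⁻¹ = charMatrix χ * diagonal μ * (charMatrix χ)ᴴ ∧
    ∀ i j, R i j * R⁻¹ i j =
      ∑ m, charMatrix χ i m * starRingEnd 𝕜 (charMatrix χ j m) * μ m := by
  have hinv : R⁻¹ = charMatrix χ * diagonal lam⁻¹ * (charMatrix χ)ᴴ := by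
    rw [hR, inv_mul_mul_conjTranspose_of_mem_unitaryGroup (charMatrix_mem_unitaryGroup hχ),
      inv_diagonal_of_ne_zero hlam]
  have hhadamard : R ⊙ R⁻¹ = charMatrix χ * diagonal μ * (charMatrix χ)ᴴ := by
    rw [hinv, hR, hadamard_charMatrix_mul_diagonal, funext hμ]
  refine ⟨hhadamard, fun i j => ?_⟩
  rw [← hadamard_apply, hhadamard, mul_diagonal_mul_conjTranspose_apply]
  rfl

end CharMatrix

section RootOfUnity

variable {p : ℕ} [NeZero p] {M : Type*} [CommMonoid M]

theorem val_finEquiv (k : Fin p) : (ZMod.finEquiv p k).val = k := by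
  cases p with
  | zero => exact k.elim0
  | succ n => rfl

/-- The character `k ↦ z ^ k` of the cyclic group `Fin p`, for a `p`-th root of unity `z`:
Mathlib's `AddChar.zmodChar`, transported to the index type of the Fourier matrix. -/
noncomputable def finChar {z : M} (hz : z ^ p = 1) : AddChar (Fin p) M :=
  (AddChar.zmodChar p hz).compAddMonoidHom (ZMod.finEquiv p : Fin p →+ ZMod p)

theorem finChar_apply {z : M} (hz : z ^ p = 1) (k : Fin p) : finChar hz k = z ^ (k : ℕ) := by
  rw [← val_finEquiv k]
  exact AddChar.zmodChar_apply hz _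

theorem finChar_pow_injective {z : M} (hz : IsPrimitiveRoot z p) :
    Function.Injective fun j : Fin p => finChar hz.pow_eq_one ^ (j : ℕ) := by
  intro i j hij
  have hgen : finChar hz.pow_eq_one (Fin.ofNat p 1) = z := by
    rw [finChar_apply, Fin.val_ofNat, ← pow_eq_pow_mod _ hz.pow_eq_one, pow_one]
  have hpow := DFunLike.congr_fun hij (Fin.ofNat p 1)
  simp only [AddChar.pow_apply, hgen] at hpow
  exact Fin.ext (hz.pow_inj i.2 j.2 hpow)

end RootOfUnity

/-- The Hadamard product `R ∘ R⁻¹` for `R = Q D_λ Qᴴ` diagonalizes in the Fourier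
basis: `R ∘ R⁻¹ = Q diag(μ) Qᴴ`, i.e. `r_{ij} r^{ij} = ∑_m q_{im} q̄_{jm} μ_m`,
where `μ_m = (1/p) ∑_{(k,l) ∈ S_m} λ_k λ_l⁻¹` (indices written 0-based, so the
congruence `k+l-1 ≡ m (mod p)` becomes `k+l ≡ m (mod p)`). -/
theorem stmt_8 (p : ℕ) (hp : 2 ≤ p)
    (ω : ℂ) (hω : ω = Complex.exp (2 * Real.pi * Complex.I / p))
    (Q : Matrix (Fin p) (Fin p) ℂ)
    (hQ : ∀ j k : Fin p, Q j k = ω ^ ((j : ℕ) * (k : ℕ)) / Real.sqrt p)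
    (lam : Fin p → ℝ) (hlam : ∀ k, 0 < lam k)
    (R : Matrix (Fin p) (Fin p) ℂ)
    (hR : R = Q * Matrix.diagonal (fun k => (lam k : ℂ)) * Qᴴ)
    (μ : Fin p → ℝ)
    (hμ : ∀ m : Fin p, μ m = (1 / p : ℝ) *
      ∑ kl ∈ Finset.univ.filter
        (fun kl : Fin p × Fin p => ((kl.1 : ℕ) + (kl.2 : ℕ)) % p = (m : ℕ)),
        lam kl.1 * (lam kl.2)⁻¹) :
    Matrix.hadamard R R⁻¹ = Q * Matrix.diagonal (fun m => (μ m : ℂ)) * Qᴴ ∧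
    ∀ i j : Fin p,
      R i j * R⁻¹ i j = ∑ m : Fin p, Q i m * (starRingEnd ℂ) (Q j m) * (μ m : ℂ) := by
  have : NeZero p := ⟨by omega⟩
  have hprim : IsPrimitiveRoot ω p := hω ▸ Complex.isPrimitiveRoot_exp p (NeZero.ne p)
  obtain rfl : Q = charMatrix fun j : Fin p => finChar hprim.pow_eq_one ^ (j : ℕ) := by
    ext j k
    simp [hQ, charMatrix, finChar_apply, pow_mul']
  refine stmt_8_general (finChar_pow_injective hprim)
    (fun k => Complex.ofReal_ne_zero.mpr (hlam k).ne') hR fun m => ?_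
  simp [hμ, addConv, Fin.ext_iff, Fin.val_add, div_eq_inv_mul]
end

section
/- Let λ(θ) be a differentiable family in (0,∞)^p with ∑_{k=1}^p ∂ log λ_k/∂θ_m = 0 for each m (e.g. when ∏_k λ_k(θ) ≡ 1), and R(θ) = Q D_{λ(θ)} Q*. Then every diagonal entry of R^{−1} (∂R/∂θ_m) is zero, and consequently, for Σ(θ,α) = D_α R(θ) D_α, the cross Fisher components vanish: (1/2) tr( Σ^{−1} (∂Σ/∂α_i) Σ^{−1} (∂Σ/∂θ_m) ) = 0 for all i and m. -/
open Matrix Complex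

/-!
The matrices `Q D Qᴴ` with `D` diagonal commute and multiply like `D`, so `R⁻¹ ∂R` and `∂R R⁻¹` are
both `Q (D⁻¹ ∂D) Qᴴ`. All entries of the Fourier matrix have the same modulus, so each diagonal
entry of that matrix is a multiple of `tr (D⁻¹ ∂D) = ∑ ∂ log λ_k = 0`. For `Σ = A R A` with `A`
diagonal, moving along `α` replaces one of the two factors `A` by a diagonal matrix `E`, and
cyclicity of the trace turns the Fisher component into
`tr (A⁻¹ E (∂R R⁻¹)) + tr (E A⁻¹ (R⁻¹ ∂R))`, which only sees the two vanishing diagonals.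
-/

section EntrywiseDerivative

variable {𝕜 𝔸 E l m n : Type*} [NontriviallyNormedField 𝕜] [NormedRing 𝔸] [NormedAlgebra 𝕜 𝔸]
  [NormedAddCommGroup E] [NormedSpace 𝕜 E]

variable (𝕜) in
/-- The entries of the matrix-valued map `F` are Fréchet differentiable at `x`, and `F'` is the
matrix of their derivatives in the direction `v`. Working entry by entry avoids choosing a norm on
matrices. -/
def HasEntrywiseFDerivAt (F : E → Matrix m n 𝔸) (F' : Matrix m n 𝔸) (x v : E) : Prop :=
  ∀ i j, ∃ L : E →L[𝕜] 𝔸, HasFDerivAt (fun y => F y i j) L x ∧ L v = F' i j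

namespace HasEntrywiseFDerivAt

theorem eq_of_forall_apply_eq_fderiv {F : E → Matrix m n 𝔸} {F' G : Matrix m n 𝔸} {x v : E}
    (hF : HasEntrywiseFDerivAt 𝕜 F F' x v)
    (hG : ∀ i j, G i j = fderiv 𝕜 (fun y => F y i j) x v) : G = F' := by
  ext i j
  obtain ⟨L, hL, hLv⟩ := hF i j
  rw [hG, hL.fderiv, hLv]

theorem const (A : Matrix m n 𝔸) (x v : E) :
    HasEntrywiseFDerivAt 𝕜 (fun _ => A) 0 x v :=
  fun i j => ⟨0, hasFDerivAt_const (A i j) x, rfl⟩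

theorem diagonal [DecidableEq n] {f : E → n → 𝔸} {f' : n → E →L[𝕜] 𝔸} {x : E}
    (hf : ∀ k, HasFDerivAt (fun y => f y k) (f' k) x) (v : E) :
    HasEntrywiseFDerivAt 𝕜 (fun y => Matrix.diagonal (f y))
      (Matrix.diagonal fun k => f' k v) x v := by
  intro i j
  obtain rfl | hij := eq_or_ne i j
  · exact ⟨f' i, by simpa only [diagonal_apply_eq] using hf i,
      (diagonal_apply_eq (fun k => f' k v) i).symm⟩
  · exact ⟨0, by simpa only [diagonal_apply_ne _ hij] using hasFDerivAt_const (0 : 𝔸) x,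
      (diagonal_apply_ne _ hij).symm⟩

theorem mul [Fintype m] {F : E → Matrix l m 𝔸} {G : E → Matrix m n 𝔸} {F' : Matrix l m 𝔸}
    {G' : Matrix m n 𝔸} {x v : E} (hF : HasEntrywiseFDerivAt 𝕜 F F' x v)
    (hG : HasEntrywiseFDerivAt 𝕜 G G' x v) :
    HasEntrywiseFDerivAt 𝕜 (fun y => F y * G y) (F' * G x + F x * G') x v := by
  intro i j
  choose L hL hLv using hF i
  choose M hM hMv using fun k => hG k j
  refine ⟨_, HasFDerivAt.fun_sum fun k _ => (hL k).fun_mul' (hM k), ?_⟩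
  simp [mul_apply, hLv, hMv, ← Finset.sum_add_distrib, add_comm]

theorem const_mul [Fintype m] {F : E → Matrix m n 𝔸} {F' : Matrix m n 𝔸} {x v : E}
    (A : Matrix l m 𝔸) (hF : HasEntrywiseFDerivAt 𝕜 F F' x v) :
    HasEntrywiseFDerivAt 𝕜 (fun y => A * F y) (A * F') x v := by
  simpa only [Matrix.zero_mul, zero_add] using (const A x v).mul hF

theorem mul_const [Fintype m] {F : E → Matrix l m 𝔸} {F' : Matrix l m 𝔸} {x v : E}
    (hF : HasEntrywiseFDerivAt 𝕜 F F' x v) (A : Matrix m n 𝔸) :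
    HasEntrywiseFDerivAt 𝕜 (fun y => F y * A) (F' * A) x v := by
  simpa only [Matrix.mul_zero, add_zero] using hF.mul (const A x v)

theorem diagonal_ofReal {V : Type*} [NormedAddCommGroup V] [NormedSpace ℝ V] [DecidableEq n]
    {f : V → n → ℝ} {x : V} (hf : ∀ k, DifferentiableAt ℝ (fun y => f y k) x) (v : V) :
    HasEntrywiseFDerivAt ℝ (fun y => Matrix.diagonal fun k => (f y k : ℂ))
      (Matrix.diagonal fun k => ((fderiv ℝ (fun y => f y k) x v : ℝ) : ℂ)) x v :=
  diagonal (fun k => ofRealCLM.hasFDerivAt.comp x (hf k).hasFDerivAt) v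

end HasEntrywiseFDerivAt

end EntrywiseDerivative

section UnitaryConjugation

variable {m n : Type*} [Fintype n] [DecidableEq n]

theorem conj_diagonal_mul_conj_diagonal {K : Type*} [Semiring K] [StarRing K] [Fintype m]
    {U : Matrix m n K} (hU : Uᴴ * U = 1) (c e : n → K) :
    (U * diagonal c * Uᴴ) * (U * diagonal e * Uᴴ) = U * diagonal (fun k => c k * e k) * Uᴴ := by
  calc (U * diagonal c * Uᴴ) * (U * diagonal e * Uᴴ)
      = U * diagonal c * (Uᴴ * U) * diagonal e * Uᴴ := by simp only [Matrix.mul_assoc]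
    _ = U * diagonal (fun k => c k * e k) * Uᴴ := by
      rw [hU, Matrix.mul_one, Matrix.mul_assoc U, diagonal_mul_diagonal]

theorem conj_diagonal_mul_conj_diagonal_inv {K : Type*} [Field K] [StarRing K]
    {U : Matrix n n K} (hU : U ∈ unitaryGroup n K) {c : n → K} (hc : ∀ k, c k ≠ 0) :
    (U * diagonal c * Uᴴ) * (U * diagonal (fun k => (c k)⁻¹) * Uᴴ) = 1 := by
  simp only [conj_diagonal_mul_conj_diagonal (mem_unitaryGroup_iff'.mp hU), mul_inv_cancel₀ (hc _),
    diagonal_one, Matrix.mul_one]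
  exact mem_unitaryGroup_iff.mp hU

theorem conj_diagonal_apply_self_of_norm_eq {𝕜 : Type*} [RCLike 𝕜] {U : Matrix m n 𝕜} {i : m}
    {r : ℝ} (hr : ∀ k, ‖U i k‖ = r) (c : n → 𝕜) :
    (U * diagonal c * Uᴴ) i i = (r : 𝕜) ^ 2 * ∑ k, c k := by
  rw [mul_apply, Finset.mul_sum]
  refine Finset.sum_congr rfl fun k _ => ?_
  rw [mul_diagonal, conjTranspose_apply, mul_right_comm, RCLike.star_def, RCLike.mul_conj, hr]

end UnitaryConjugation

section ScaledTrace

variable {n K : Type*} [Fintype n] [DecidableEq n]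

theorem trace_diagonal_mul_eq_zero [NonUnitalNonAssocSemiring K] (e : n → K) {M : Matrix n n K}
    (hM : ∀ i, M i i = 0) : (diagonal e * M).trace = 0 := by
  simp only [trace, diag_apply, diagonal_mul, hM, mul_zero, Finset.sum_const_zero]

variable [CommRing K]

theorem trace_inv_mul_mul_inv_mul_scaled {A R : Matrix n n K} (hA : IsUnit A.det)
    (hR : IsUnit R.det) (E S : Matrix n n K) :
    ((A * R * A)⁻¹ * (E * R * A + A * R * E) * (A * R * A)⁻¹ * (A * S * A)).trace
      = (A⁻¹ * E * (S * R⁻¹)).trace + (E * A⁻¹ * (R⁻¹ * S)).trace := by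
  have hAA : A * A⁻¹ = 1 := mul_nonsing_inv A hA
  have hAA' : A⁻¹ * A = 1 := nonsing_inv_mul A hA
  have trace_conj (X : Matrix n n K) : (A⁻¹ * X * A).trace = X.trace := by
    rw [trace_mul_cycle, hAA, Matrix.one_mul]
  have hsplit : (A * R * A)⁻¹ * (E * R * A + A * R * E) * (A * R * A)⁻¹ * (A * S * A)
      = A⁻¹ * (R⁻¹ * (A⁻¹ * E * S)) * A + A⁻¹ * (E * A⁻¹ * (R⁻¹ * S)) * A := by
    calc (A * R * A)⁻¹ * (E * R * A + A * R * E) * (A * R * A)⁻¹ * (A * S * A)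
        = A⁻¹ * R⁻¹ * A⁻¹ * E * (R * (A * A⁻¹) * R⁻¹) * (A⁻¹ * A) * S * A
          + A⁻¹ * (R⁻¹ * (A⁻¹ * A) * R) * E * A⁻¹ * R⁻¹ * (A⁻¹ * A) * S * A := by
          rw [Matrix.mul_inv_rev, Matrix.mul_inv_rev]; noncomm_ring
      _ = _ := by
          simp only [hAA, hAA', Matrix.mul_one, mul_nonsing_inv R hR, nonsing_inv_mul R hR]
          noncomm_ring
  rw [hsplit, trace_add, trace_conj, trace_conj, trace_mul_comm R⁻¹, Matrix.mul_assoc _ S]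

theorem trace_inv_mul_mul_inv_mul_scaled_diagonal_eq_zero {a : n → K} (ha : IsUnit a)
    {R : Matrix n n K} (hR : IsUnit R.det) (e : n → K) {S : Matrix n n K}
    (hRS : ∀ i, (R⁻¹ * S) i i = 0) (hSR : ∀ i, (S * R⁻¹) i i = 0) :
    ((diagonal a * R * diagonal a)⁻¹ * (diagonal e * R * diagonal a + diagonal a * R * diagonal e)
      * (diagonal a * R * diagonal a)⁻¹ * (diagonal a * S * diagonal a)).trace = 0 := by
  have hdet : IsUnit (diagonal a).det := (isUnit_iff_isUnit_det _).mp (isUnit_diagonal.mpr ha)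
  rw [trace_inv_mul_mul_inv_mul_scaled hdet hR, inv_diagonal, diagonal_mul_diagonal,
    diagonal_mul_diagonal, trace_diagonal_mul_eq_zero _ hSR, trace_diagonal_mul_eq_zero _ hRS,
    add_zero]

end ScaledTrace

section FourierMatrix

variable {p : ℕ} {ω : ℂ}

/-- The discrete Fourier matrix of order `p` built on the root of unity `ω`, normalised to be
unitary when `ω` is primitive; rows and columns are indexed from `0`. -/
noncomputable def fourierMatrix (p : ℕ) (ω : ℂ) : Matrix (Fin p) (Fin p) ℂ :=
  of fun j k => ω ^ ((j : ℕ) * (k : ℕ)) / Real.sqrt p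

theorem sum_range_pow_eq_ite_of_pow_eq_one {K : Type*} [DivisionRing K] [DecidableEq K] {z : K}
    (hz : z ^ p = 1) : ∑ l ∈ Finset.range p, z ^ l = if z = 1 then (p : K) else 0 := by
  split_ifs with h
  · simp [h]
  · rw [geom_sum_eq h, hz, sub_self, zero_div]

theorem norm_fourierMatrix_apply (hω : IsPrimitiveRoot ω p) (j k : Fin p) :
    ‖fourierMatrix p ω j k‖ = (Real.sqrt p)⁻¹ := by
  simp [fourierMatrix, hω.norm'_eq_one j.pos.ne', abs_of_nonneg]

theorem fourierMatrix_mul_star_fourierMatrix (hω : IsPrimitiveRoot ω p) (j k l : Fin p) :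
    fourierMatrix p ω j l * star (fourierMatrix p ω k l)
      = (ω ^ (j : ℕ) / ω ^ (k : ℕ)) ^ (l : ℕ) / p := by
  have hstar : star ω = ω⁻¹ := (inv_eq_conj (hω.norm'_eq_one j.pos.ne')).symm
  have hsqrt : (Real.sqrt p : ℂ) * star (Real.sqrt p : ℂ) = p := by
    rw [star_def, conj_ofReal, ← ofReal_mul, Real.mul_self_sqrt p.cast_nonneg, ofReal_natCast]
  simp only [fourierMatrix, of_apply]
  rw [star_div₀, star_pow, hstar, div_mul_div_comm, hsqrt, inv_pow, ← div_eq_mul_inv, div_pow,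
    ← pow_mul, ← pow_mul]

theorem fourierMatrix_mem_unitaryGroup (hω : IsPrimitiveRoot ω p) :
    fourierMatrix p ω ∈ unitaryGroup (Fin p) ℂ := by
  rw [mem_unitaryGroup_iff, star_eq_conjTranspose]
  ext j k
  have hω0 : ω ^ (k : ℕ) ≠ 0 := pow_ne_zero _ (hω.ne_zero j.pos.ne')
  have hpow : (ω ^ (j : ℕ) / ω ^ (k : ℕ)) ^ p = 1 := by
    rw [div_pow, pow_right_comm ω j p, pow_right_comm ω k p, hω.pow_eq_one, one_pow, one_pow,
      div_one]
  have hratio : ω ^ (j : ℕ) / ω ^ (k : ℕ) = 1 ↔ j = k := by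
    rw [div_eq_one_iff_eq hω0]
    exact ⟨fun h => Fin.ext (hω.pow_inj j.2 k.2 h), fun h => h ▸ rfl⟩
  simp only [mul_apply, conjTranspose_apply, fourierMatrix_mul_star_fourierMatrix hω]
  rw [← Finset.sum_div, Fin.sum_univ_eq_sum_range fun l => (ω ^ (j : ℕ) / ω ^ (k : ℕ)) ^ l,
    sum_range_pow_eq_ite_of_pow_eq_one hpow, one_apply, ite_div, zero_div,
    div_self (Nat.cast_ne_zero.mpr j.pos.ne')]
  simp only [hratio]

end FourierMatrix

theorem sum_inv_mul_fderiv_eq_zero_of_sum_fderiv_log {E n : Type*} [NormedAddCommGroup E]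
    [NormedSpace ℝ E] [Fintype n] {f : E → n → ℝ} {x v : E} (hne : ∀ k, f x k ≠ 0)
    (hf : ∀ k, DifferentiableAt ℝ (fun y => f y k) x)
    (hsum : ∑ k, fderiv ℝ (fun y => Real.log (f y k)) x v = 0) :
    ∑ k, (f x k : ℂ)⁻¹ * (fderiv ℝ (fun y => f y k) x v : ℝ) = 0 := by
  simp only [fderiv.log (hf _) (hne _), _root_.smul_apply, smul_eq_mul] at hsum
  exact_mod_cast hsum

theorem stmt_9_general {E n : Type*} [NormedAddCommGroup E] [NormedSpace ℝ E] [Fintype n]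
    [DecidableEq n] {Q : Matrix n n ℂ} (hQ : Q ∈ unitaryGroup n ℂ) {r : ℝ}
    (hr : ∀ i k, ‖Q i k‖ = r) {lam : E → n → ℝ} {θ v : E} (hne : ∀ k, lam θ k ≠ 0)
    (hdiff : ∀ k, DifferentiableAt ℝ (fun θ' => lam θ' k) θ)
    (hsum : ∑ k, fderiv ℝ (fun θ' => Real.log (lam θ' k)) θ v = 0)
    {R : E → Matrix n n ℂ} (hR : ∀ θ, R θ = Q * diagonal (fun k => (lam θ k : ℂ)) * Qᴴ)
    {dR : Matrix n n ℂ} (hdR : ∀ a b, dR a b = fderiv ℝ (fun θ' => R θ' a b) θ v)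
    {Sigm : E → (n → ℝ) → Matrix n n ℂ}
    (hSigm : ∀ θ α, Sigm θ α =
      diagonal (fun i => (α i : ℂ)) * R θ * diagonal (fun i => (α i : ℂ))) :
    (∀ i, ((R θ)⁻¹ * dR) i i = 0) ∧
    ∀ α : n → ℝ, (∀ i, α i ≠ 0) → ∀ (w : n → ℝ) (dSigα dSigθ : Matrix n n ℂ),
      (∀ a b, dSigα a b = fderiv ℝ (fun α' => Sigm θ α' a b) α w) →
      (∀ a b, dSigθ a b = fderiv ℝ (fun θ' => Sigm θ' α a b) θ v) →
      (1 / 2 : ℂ) * ((Sigm θ α)⁻¹ * dSigα * (Sigm θ α)⁻¹ * dSigθ).trace = 0 := by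
  obtain rfl : R = _ := funext hR
  obtain rfl : Sigm = _ := funext₂ hSigm
  have hRderiv := ((HasEntrywiseFDerivAt.diagonal_ofReal hdiff v).const_mul Q).mul_const Qᴴ
  have hdR' := hRderiv.eq_of_forall_apply_eq_fderiv hdR
  have hRinv := conj_diagonal_mul_conj_diagonal_inv hQ fun k => ofReal_ne_zero.mpr (hne k)
  have hQQ : Qᴴ * Q = 1 := mem_unitaryGroup_iff'.mp hQ
  have hlogsum := sum_inv_mul_fderiv_eq_zero_of_sum_fderiv_log hne hdiff hsum
  have hzero i : ((Q * diagonal (fun k => (lam θ k : ℂ)) * Qᴴ)⁻¹ * dR) i i = 0 := by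
    rw [inv_eq_right_inv hRinv, hdR', conj_diagonal_mul_conj_diagonal hQQ,
      conj_diagonal_apply_self_of_norm_eq (hr i), hlogsum, mul_zero]
  have hcomm : dR * (Q * diagonal (fun k => (lam θ k : ℂ)) * Qᴴ)⁻¹
      = (Q * diagonal (fun k => (lam θ k : ℂ)) * Qᴴ)⁻¹ * dR := by
    simp only [inv_eq_right_inv hRinv, hdR', conj_diagonal_mul_conj_diagonal hQQ, mul_comm]
  refine ⟨hzero, fun α hα w dSigα dSigθ hdα hdθ => ?_⟩
  have hdiag := HasEntrywiseFDerivAt.diagonal_ofReal (f := fun α : n → ℝ => α)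
    (fun k => differentiableAt_apply k α) w
  rw [((hdiag.mul_const _).mul hdiag).eq_of_forall_apply_eq_fderiv hdα,
    ((hRderiv.const_mul _).mul_const _).eq_of_forall_apply_eq_fderiv hdθ, ← hdR',
    trace_inv_mul_mul_inv_mul_scaled_diagonal_eq_zero
      (Pi.isUnit_iff.mpr fun i => (ofReal_ne_zero.mpr (hα i)).isUnit)
      (isUnit_det_of_right_inverse hRinv) _ hzero fun i => hcomm ▸ hzero i, mul_zero]

/-- If `∑_k ∂ log λ_k/∂θ_m = 0` for each `m` (e.g. when `∏_k λ_k(θ) ≡ 1`), then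
every diagonal entry of `R⁻¹ ∂R/∂θ_m` vanishes for `R(θ) = Q D_{λ(θ)} Qᴴ`, and
the cross Fisher components vanish:
`(1/2) tr(Σ⁻¹ ∂Σ/∂α_i Σ⁻¹ ∂Σ/∂θ_m) = 0` for `Σ(θ,α) = D_α R(θ) D_α`. -/
theorem stmt_9 (p d : ℕ) (hp : 2 ≤ p)
    (ω : ℂ) (hω : ω = Complex.exp (2 * Real.pi * Complex.I / p))
    (Q : Matrix (Fin p) (Fin p) ℂ)
    (hQ : ∀ j k : Fin p, Q j k = ω ^ ((j : ℕ) * (k : ℕ)) / Real.sqrt p)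
    (lam : (Fin d → ℝ) → Fin p → ℝ)
    (hpos : ∀ θ k, 0 < lam θ k)
    (hdiff : ∀ k, Differentiable ℝ fun θ => lam θ k)
    (hsum : ∀ θ (m : Fin d),
      ∑ k : Fin p, fderiv ℝ (fun θ' => Real.log (lam θ' k)) θ (Pi.single m 1) = 0)
    (R : (Fin d → ℝ) → Matrix (Fin p) (Fin p) ℂ)
    (hRdef : ∀ θ, R θ = Q * Matrix.diagonal (fun k => (lam θ k : ℂ)) * Qᴴ)
    (dR : Fin d → (Fin d → ℝ) → Matrix (Fin p) (Fin p) ℂ)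
    (hdR : ∀ m θ a b, dR m θ a b = fderiv ℝ (fun θ' => R θ' a b) θ (Pi.single m 1))
    (Sigm : (Fin d → ℝ) → (Fin p → ℝ) → Matrix (Fin p) (Fin p) ℂ)
    (hSigm : ∀ θ α, Sigm θ α =
      Matrix.diagonal (fun i => (α i : ℂ)) * R θ * Matrix.diagonal (fun i => (α i : ℂ)))
    (dSigα : Fin p → (Fin d → ℝ) → (Fin p → ℝ) → Matrix (Fin p) (Fin p) ℂ)
    (hdSigα : ∀ i θ α a b,
      dSigα i θ α a b = fderiv ℝ (fun α' => Sigm θ α' a b) α (Pi.single i 1))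
    (dSigθ : Fin d → (Fin d → ℝ) → (Fin p → ℝ) → Matrix (Fin p) (Fin p) ℂ)
    (hdSigθ : ∀ m θ α a b,
      dSigθ m θ α a b = fderiv ℝ (fun θ' => Sigm θ' α a b) θ (Pi.single m 1)) :
    (∀ θ (m : Fin d) (i : Fin p), ((R θ)⁻¹ * dR m θ) i i = 0) ∧
    (∀ θ (α : Fin p → ℝ), (∀ i, 0 < α i) → ∀ (i : Fin p) (m : Fin d),
      (1 / 2 : ℂ) *
        ((Sigm θ α)⁻¹ * dSigα i θ α * (Sigm θ α)⁻¹ * dSigθ m θ α).trace = 0) := by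
  have hω' : IsPrimitiveRoot ω p := hω ▸ isPrimitiveRoot_exp p (by omega)
  obtain rfl : Q = fourierMatrix p ω := Matrix.ext hQ
  have h θ m := stmt_9_general (fourierMatrix_mem_unitaryGroup hω') (norm_fourierMatrix_apply hω')
    (fun k => (hpos θ k).ne') (fun k => hdiff k θ) (hsum θ m) hRdef (hdR m θ) hSigm
  exact ⟨fun θ m => (h θ m).1, fun θ α hα i m =>
    (h θ m).2 α (fun j => (hα j).ne') _ _ _ (hdSigα i θ α) (hdSigθ m θ α)⟩
end

section
/- (Strict convexity of the log-determinant of g_β) Suppose log λ_k(θ) = ∑_{i=1}^d c_i^k θ_i is linear in θ ∈ ℝ^d with ∑_{k=1}^p c_i^k = 0 for each i, and the d vectors (c_i^1,…,c_i^p), i = 1,…,d, are linearly independent. Then the function F(θ) = ∑_{m=1}^p log( 1 + μ_m(θ) ), where μ_m(θ) = (1/p) ∑_{(k,l)∈S_m} λ_k(θ) λ_l(θ)^{−1}, has positive definite Hessian at every θ ∈ ℝ^d; in particular F is strictly convex. -/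
/-!
Under the measure `ν_m = δ_(k₀,k₀) + p⁻¹ · count|S_m` on pairs of indices, the function
`Y θ (k, l) = log (λ_k θ) - log (λ_l θ)` is linear in `θ` and `1 + μ_m(θ) = ∫ exp (Y θ) dν_m`: the
diagonal atom, where `Y θ` vanishes, accounts for the constant `1`. So `F` is a sum of
log-partition functions, and the Hessian of each one at `θ` in the direction `v` is the variance of
`Y v` under the exponentially tilted measure. For `v ≠ 0`, linear independence and the zero row
sums give `k, l` with `Y v (k, l) ≠ 0 = Y v (k₀, k₀)`, so the variance is positive for the class
`m` of `(k, l)`.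
-/

open MeasureTheory ProbabilityTheory
open scoped NNReal

theorem iteratedDeriv_comp_add_smul {𝕜 E G : Type*} [NontriviallyNormedField 𝕜]
    [NormedAddCommGroup E] [NormedSpace 𝕜 E] [NormedAddCommGroup G] [NormedSpace 𝕜 G]
    {f : E → G} {n : ℕ} (hf : ContDiff 𝕜 n f) (x v : E) (t : 𝕜) :
    iteratedDeriv n (fun s : 𝕜 => f (x + s • v)) t =
      iteratedFDeriv 𝕜 n f (x + t • v) fun _ => v := by
  have hcomp := (ContinuousLinearMap.toSpanSingleton 𝕜 v).iteratedFDeriv_comp_right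
    (hf.comp (contDiff_const.add contDiff_id : ContDiff 𝕜 n fun y => x + y)) t le_rfl
  have happly := congrArg (fun A => A fun _ => (1 : 𝕜)) hcomp
  simpa [Function.comp_def, iteratedDeriv_eq_iteratedFDeriv, iteratedFDeriv_comp_add_left]
    using happly

theorem strictConvexOn_univ_of_comp_add_smul {E β : Type*} [AddCommGroup E] [Module ℝ E]
    [AddCommMonoid β] [PartialOrder β] [SMul ℝ β] {f : E → β}
    (h : ∀ x v : E, v ≠ 0 → StrictConvexOn ℝ Set.univ fun t : ℝ => f (x + t • v)) :
    StrictConvexOn ℝ Set.univ f := by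
  refine ⟨convex_univ, fun x _ y _ hxy a b ha hb hab => ?_⟩
  have hline := (h x (y - x) (sub_ne_zero.mpr hxy.symm)).2 (Set.mem_univ 0) (Set.mem_univ 1)
    zero_ne_one ha hb hab
  have hcomb : x + b • (y - x) = a • x + b • y := by
    rw [eq_sub_of_add_eq hab]
    module
  simpa [hcomb] using hline

theorem strictConvexOn_univ_of_iteratedFDeriv_two_pos {E : Type*} [NormedAddCommGroup E]
    [NormedSpace ℝ E] {f : E → ℝ} (hf : ContDiff ℝ 2 f)
    (hpos : ∀ x v : E, v ≠ 0 → 0 < iteratedFDeriv ℝ 2 f x fun _ => v) :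
    StrictConvexOn ℝ Set.univ f := by
  refine strictConvexOn_univ_of_comp_add_smul fun x v hv => ?_
  refine strictConvexOn_univ_of_deriv2_pos (by have := hf.continuous; fun_prop) fun t => ?_
  rw [← iteratedDeriv_eq_iterate, iteratedDeriv_comp_add_smul hf]
  exact hpos _ v hv

theorem sum_sum_fderiv_single_eq_iteratedFDeriv_two {ι : Type*} [Fintype ι] [DecidableEq ι]
    {f : (ι → ℝ) → ℝ} {x : ι → ℝ} (hf : DifferentiableAt ℝ (fderiv ℝ f) x) (v : ι → ℝ) :
    ∑ i, ∑ j, v i * v j *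
        fderiv ℝ (fun y => fderiv ℝ f y (Pi.single j 1)) x (Pi.single i 1) =
      iteratedFDeriv ℝ 2 f x fun _ => v := by
  have hentry (u w : ι → ℝ) :
      fderiv ℝ (fun y => fderiv ℝ f y u) x w = fderiv ℝ (fderiv ℝ f) x w u := by
    simp [fderiv_clm_apply hf (differentiableAt_const u)]
  have hv : v = ∑ i, v i • (Pi.single i 1 : ι → ℝ) := pi_eq_sum_univ' v
  rw [iteratedFDeriv_two_apply]
  conv_rhs => rw [hv]
  simp only [hentry, map_sum, map_smul, sum_apply, smul_apply, smul_eq_mul, Finset.mul_sum,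
    mul_assoc]
  rw [Finset.sum_comm]
  exact Finset.sum_congr rfl fun i _ => Finset.sum_congr rfl fun j _ => by ring

section LogPartition

theorem variance_pos_of_measure_singleton_ne_zero {Ω : Type*} [MeasurableSpace Ω] {μ : Measure Ω}
    [IsFiniteMeasure μ] {X : Ω → ℝ} (hX : MemLp X 2 μ) {x y : Ω} (hx : μ {x} ≠ 0) (hy : μ {y} ≠ 0)
    (hxy : X x ≠ X y) : 0 < Var[X; μ] := by
  refine (variance_nonneg X μ).lt_of_ne' fun hvar => hxy ?_
  have hae := ae_eq_integral_of_variance_eq_zero hX hvar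
  have hatom {z : Ω} (hz : μ {z} ≠ 0) : X z = μ[X] := by
    by_contra hne
    exact hz (measure_mono_null (Set.singleton_subset_iff.mpr hne) hae)
  rw [hatom hx, hatom hy]

variable {Ω E : Type*} [Finite Ω] [MeasurableSpace Ω] [MeasurableSingletonClass Ω]
  [NormedAddCommGroup E] [NormedSpace ℝ E]

/-- The log-partition function `θ ↦ log ∫ exp (Y θ ω) dμ(ω)` of the exponential family with base
measure `μ` on a finite space, whose energy `Y θ` is linear in the parameter `θ`. -/
noncomputable def logPartition (μ : Measure Ω) (Y : E →L[ℝ] Ω → ℝ) (θ : E) : ℝ :=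
  Real.log (∫ ω, Real.exp (Y θ ω) ∂μ)

variable (μ : Measure Ω) [IsFiniteMeasure μ] [NeZero μ] (Y : E →L[ℝ] Ω → ℝ)

theorem contDiff_logPartition {n : WithTop ℕ∞} : ContDiff ℝ n (logPartition μ Y) := by
  have := Fintype.ofFinite Ω
  refine ContDiff.log ?_ fun θ => (integral_exp_pos .of_finite).ne'
  simp only [integral_fintype .of_finite]
  have hcoord (ω : Ω) : ContDiff ℝ n fun θ => Y θ ω := (contDiff_apply ℝ ℝ ω).comp Y.contDiff
  exact ContDiff.sum fun ω _ => (hcoord ω).exp.const_smul _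

theorem logPartition_add_smul (θ v : E) (t : ℝ) :
    logPartition μ Y (θ + t • v) = logPartition μ Y θ + cgf (Y v) (μ.tilted (Y θ)) t := by
  have hpos (θ : E) : 0 < ∫ ω, Real.exp (Y θ ω) ∂μ := integral_exp_pos .of_finite
  have htilt : mgf (Y v) (μ.tilted (Y θ)) t =
      (∫ ω, Real.exp (Y (θ + t • v) ω) ∂μ) / ∫ ω, Real.exp (Y θ ω) ∂μ := by
    simpa [mgf] using integral_exp_tilted (μ := μ) (Y θ) (t • Y v)
  rw [cgf, htilt, Real.log_div (hpos _).ne' (hpos _).ne', logPartition, logPartition,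
    add_sub_cancel]

theorem iteratedFDeriv_two_logPartition_eq_variance (θ v : E) :
    iteratedFDeriv ℝ 2 (logPartition μ Y) θ (fun _ => v) = Var[Y v; μ.tilted (Y θ)] := by
  have := isProbabilityMeasure_tilted (μ := μ) (f := Y θ) .of_finite
  have hzero : (0 : ℝ) ∈ interior (integrableExpSet (Y v) (μ.tilted (Y θ))) := by
    have huniv : integrableExpSet (Y v) (μ.tilted (Y θ)) = Set.univ :=
      Set.eq_univ_of_forall fun _ => Integrable.of_finite
    simp [huniv]
  calc iteratedFDeriv ℝ 2 (logPartition μ Y) θ (fun _ => v)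
      = iteratedDeriv 2 (fun t : ℝ => logPartition μ Y (θ + t • v)) 0 := by
        simp [iteratedDeriv_comp_add_smul (n := 2) (contDiff_logPartition μ Y)]
    _ = iteratedDeriv 2 (cgf (Y v) (μ.tilted (Y θ))) 0 := by
        simp only [logPartition_add_smul, iteratedDeriv_const_add two_pos]
    _ = Var[Y v; μ.tilted (Y θ)] := by
        simp [← variance_tilted_mul hzero]

theorem iteratedFDeriv_two_logPartition_nonneg (θ v : E) :
    0 ≤ iteratedFDeriv ℝ 2 (logPartition μ Y) θ fun _ => v :=
  (variance_nonneg _ _).trans_eq (iteratedFDeriv_two_logPartition_eq_variance μ Y θ v).symm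

theorem iteratedFDeriv_two_logPartition_pos (θ : E) {v : E} {x y : Ω} (hx : μ {x} ≠ 0)
    (hy : μ {y} ≠ 0) (hxy : Y v x ≠ Y v y) :
    0 < iteratedFDeriv ℝ 2 (logPartition μ Y) θ fun _ => v := by
  have := isProbabilityMeasure_tilted (μ := μ) (f := Y θ) .of_finite
  have hac : μ ≪ μ.tilted (Y θ) := absolutelyContinuous_tilted .of_finite
  rw [iteratedFDeriv_two_logPartition_eq_variance]
  exact variance_pos_of_measure_singleton_ne_zero .of_discrete (mt (@hac _) hx) (mt (@hac _) hy) hxy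

theorem iteratedFDeriv_two_sum_logPartition_pos {ι : Type*} [Fintype ι] (μ : ι → Measure Ω)
    [∀ i, IsFiniteMeasure (μ i)] [∀ i, NeZero (μ i)] (θ : E) {v : E} {i : ι} {x y : Ω}
    (hx : μ i {x} ≠ 0) (hy : μ i {y} ≠ 0) (hxy : Y v x ≠ Y v y) :
    0 < iteratedFDeriv ℝ 2 (fun θ => ∑ i, logPartition (μ i) Y θ) θ fun _ => v := by
  rw [iteratedFDeriv_fun_sum_apply fun i _ => (contDiff_logPartition (μ i) Y).contDiffAt,
    sum_apply]
  exact Finset.sum_pos' (fun i _ => iteratedFDeriv_two_logPartition_nonneg (μ i) Y θ v)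
    ⟨i, Finset.mem_univ i, iteratedFDeriv_two_logPartition_pos (μ i) Y θ hx hy hxy⟩

end LogPartition

section DiracAddCount

variable {Ω : Type*} [MeasurableSpace Ω]

/-- The measure `δ_{ω₀} + a · count|_S`, which encodes `f ω₀ + a ∑ ω ∈ S, f ω` as an integral. -/
noncomputable def diracAddCount (ω₀ : Ω) (a : ℝ≥0) (S : Finset Ω) : Measure Ω :=
  .dirac ω₀ + a • Measure.count.restrict S

variable (ω₀ : Ω) {a : ℝ≥0} {S : Finset Ω}

theorem diracAddCount_singleton_self_ne_zero : diracAddCount ω₀ a S {ω₀} ≠ 0 := by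
  simp [diracAddCount]

instance : NeZero (diracAddCount ω₀ a S) :=
  ⟨fun h => diracAddCount_singleton_self_ne_zero ω₀ (a := a) (S := S) (by simp [h])⟩

variable [MeasurableSingletonClass Ω]

theorem diracAddCount_singleton_ne_zero (ha : a ≠ 0) {ω : Ω} (hω : ω ∈ S) :
    diracAddCount ω₀ a S {ω} ≠ 0 := by
  simp [diracAddCount, ha, hω]

instance : IsFiniteMeasure (diracAddCount ω₀ a S) := by
  have : IsFiniteMeasure (Measure.count.restrict (S : Set Ω)) := ⟨by simp⟩
  unfold diracAddCount
  infer_instance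

theorem integral_diracAddCount (f : Ω → ℝ) :
    ∫ ω, f ω ∂diracAddCount ω₀ a S = f ω₀ + a * ∑ ω ∈ S, f ω := by
  have hf : IntegrableOn f S Measure.count := by
    rw [← Set.biUnion_of_singleton (S : Set Ω)]
    exact (integrableOn_finite_biUnion S.finite_toSet).mpr fun _ _ =>
      integrableOn_singleton (hx := by simp)
  rw [diracAddCount, integral_add_measure (integrable_dirac (by simp)) hf.smul_measure_nnreal,
    integral_dirac, integral_smul_nnreal_measure, setIntegral_finset S hf]
  simp [NNReal.smul_def]

end DiracAddCount

section PairDiff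

/-- The linear map taking `x` to the family of differences `x k - x l`; applied to the vector
`log λ`, it gives the logarithms of the ratios `λ_k / λ_l`. -/
def pairDiff (κ : Type*) : (κ → ℝ) →L[ℝ] κ × κ → ℝ :=
  .pi fun kl => .proj kl.1 - .proj kl.2

variable {κ : Type*}

@[simp]
theorem pairDiff_apply (x : κ → ℝ) (kl : κ × κ) : pairDiff κ x kl = x kl.1 - x kl.2 := rfl

theorem exists_pairDiff_ne_zero [Fintype κ] {x : κ → ℝ} (hsum : ∑ k, x k = 0) (hx : x ≠ 0) :
    ∃ kl, pairDiff κ x kl ≠ 0 := by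
  by_contra! hconst
  obtain ⟨k, hk⟩ := Function.ne_iff.mp hx
  have heq (l : κ) : x l = x k := sub_eq_zero.mp (hconst (l, k))
  have : Nonempty κ := ⟨k⟩
  exact hk (by simpa [heq] using hsum)

variable {ι : Type*} [Fintype ι]

/-- The logarithms of the ratios `λ_k / λ_l` as linear functions of the parameter `θ` of the
log-linear family `log λ_k(θ) = ∑ i, c i k * θ i`. -/
noncomputable def logRatio (c : ι → κ → ℝ) : (ι → ℝ) →L[ℝ] κ × κ → ℝ :=
  (pairDiff κ).comp (Fintype.linearCombination ℝ c).toContinuousLinearMap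

theorem logRatio_apply (c : ι → κ → ℝ) (θ : ι → ℝ) (kl : κ × κ) :
    logRatio c θ kl = ∑ i, c i kl.1 * θ i - ∑ i, c i kl.2 * θ i := by
  simp [logRatio, Fintype.linearCombination_apply, mul_comm]

theorem exists_logRatio_ne_zero [Fintype κ] {c : ι → κ → ℝ} (hc : LinearIndependent ℝ c)
    (hsum : ∀ i, ∑ k, c i k = 0) {v : ι → ℝ} (hv : v ≠ 0) : ∃ kl, logRatio c v kl ≠ 0 := by
  refine exists_pairDiff_ne_zero (x := Fintype.linearCombination ℝ c v) ?_ ?_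
  · simp only [Fintype.linearCombination_apply, Finset.sum_apply, Pi.smul_apply, smul_eq_mul]
    rw [Finset.sum_comm]
    simp [← Finset.mul_sum, hsum]
  · exact (map_ne_zero_iff _ hc.fintypeLinearCombination_injective).mpr hv

end PairDiff

/-- Strict convexity of `F(θ) = log det(I + R(θ) ∘ R(θ)⁻¹) = ∑_m log(1 + μ_m(θ))`
for the log-linear family `log λ_k(θ) = ∑_i c_i^k θ_i` with `∑_k c_i^k = 0` and
linearly independent rows `c_i`: the Hessian of `F` is positive definite at every
`θ`, and `F` is strictly convex. -/
theorem stmt_12 (p d : ℕ) (hp : 2 ≤ p) (hd : 1 ≤ d) (hdp : d ≤ p)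
    (c : Fin d → Fin p → ℝ)
    (hc0 : ∀ i, ∑ k : Fin p, c i k = 0)
    (hindep : LinearIndependent ℝ c)
    (lam : (Fin d → ℝ) → Fin p → ℝ)
    (hlam : ∀ θ k, lam θ k = Real.exp (∑ i : Fin d, c i k * θ i))
    (F : (Fin d → ℝ) → ℝ)
    (hF : ∀ θ, F θ = ∑ m : Fin p, Real.log (1 + (1 / p : ℝ) *
      ∑ kl ∈ Finset.univ.filter
        (fun kl : Fin p × Fin p => ((kl.1 : ℕ) + (kl.2 : ℕ)) % p = (m : ℕ)),
        lam θ kl.1 * (lam θ kl.2)⁻¹)) :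
    (∀ (θ : Fin d → ℝ) (v : Fin d → ℝ), v ≠ 0 →
      0 < ∑ i : Fin d, ∑ j : Fin d, v i * v j *
        fderiv ℝ (fun θ' => fderiv ℝ F θ' (Pi.single j 1)) θ (Pi.single i 1)) ∧
    StrictConvexOn ℝ Set.univ F := by
  have : NeZero p := ⟨by omega⟩
  let S (m : Fin p) : Finset (Fin p × Fin p) :=
    Finset.univ.filter fun kl => (kl.1 + kl.2 : ℕ) % p = m
  let ν (m : Fin p) := diracAddCount (0, 0) (1 / p : ℝ≥0) (S m)
  obtain rfl : F = fun θ => ∑ m, logPartition (ν m) (logRatio c) θ := by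
    funext θ
    simp [hF, hlam, logPartition, ν, S, integral_diracAddCount, logRatio_apply, Real.exp_sub,
      div_eq_mul_inv]
  have hF2 : ContDiff ℝ 2 fun θ => ∑ m, logPartition (ν m) (logRatio c) θ :=
    ContDiff.sum fun m _ => contDiff_logPartition (ν m) (logRatio c)
  have hess_pos (θ v : Fin d → ℝ) (hv : v ≠ 0) : 0 < iteratedFDeriv ℝ 2
      (fun θ => ∑ m, logPartition (ν m) (logRatio c) θ) θ fun _ => v := by
    obtain ⟨⟨k, l⟩, hkl⟩ := exists_logRatio_ne_zero hindep hc0 hv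
    let m : Fin p := ⟨(k + l : ℕ) % p, Nat.mod_lt _ (NeZero.pos p)⟩
    have hatom : ν m {(k, l)} ≠ 0 :=
      diracAddCount_singleton_ne_zero _ (by simp [NeZero.ne p]) (by simp [S, m])
    exact iteratedFDeriv_two_sum_logPartition_pos (logRatio c) ν θ hatom
      (diracAddCount_singleton_self_ne_zero _) (by simpa [logRatio_apply] using hkl)
  refine ⟨fun θ v hv => ?_, strictConvexOn_univ_of_iteratedFDeriv_two_pos hF2 hess_pos⟩
  rw [sum_sum_fderiv_single_eq_iteratedFDeriv_two
    ((hF2.fderiv_right (m := 1) le_rfl).differentiable one_ne_zero θ)]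
  exact hess_pos θ v hv
end

section
/- (Superharmonicity of the shrinkage prior ratio) Under the hypotheses that log λ_k(θ) = ∑_{i=1}^d c_i^k θ_i with ∑_{k=1}^p c_i^k = 0 for each i and the vectors (c_i^k)_{k=1}^p, i = 1,…,d, linearly independent, let F(θ) = ∑_{m=1}^p log(1 + μ_m(θ)) and let G be any constant symmetric positive definite d×d matrix with inverse entries G^{ij}. Then the function f(θ) = exp(−F(θ)/2) satisfies ∑_{i,j=1}^d G^{ij} ( ∂_i ∂_j f + (1/2)(∂_i F)(∂_j f) ) < 0 at every θ ∈ ℝ^d. -/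
/-!
Since `f = exp (-F / 2)`, the first-order terms cancel and the operator applied to `f` equals
`-(1/2) f ∑ Gⁱʲ ∂ᵢ∂ⱼF`, so it suffices to show `∑ Gⁱʲ ∂ᵢ∂ⱼF > 0`. Each `1 + μ_m` is a
partition function `∑ wₐ exp (ℓₐ θ)`, the summand `1` being an atom with exponent `0`, and the
Hessian of its logarithm is the covariance of the `ℓₐ` under the Gibbs weights. Contracting that
covariance with the positive definite `G⁻¹` gives a variance, which is positive as soon as two of
the exponents differ. A non-constant row of `c` provides a nonzero exponent for some `m`.
-/

open Real

section PartitionFunction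

variable {E α : Type*} [NormedAddCommGroup E] [NormedSpace ℝ E]
  (s : Finset α) (w : α → ℝ) (ℓ : α → E →L[ℝ] ℝ)

/-- The partition function of the exponential family with atoms `a ∈ s` of mass `w a` and
sufficient statistics `ℓ a`, as a function of the natural parameter. -/
noncomputable def partitionFunction (θ : E) : ℝ :=
  ∑ a ∈ s, w a * exp (ℓ a θ)

/-- The probability of the atom `a` under the Gibbs distribution with parameter `θ`. -/
noncomputable def gibbsWeight (θ : E) (a : α) : ℝ :=
  w a * exp (ℓ a θ) / partitionFunction s w ℓ θ

/-- The expectation of the sufficient statistic under the Gibbs distribution with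
parameter `θ`. -/
noncomputable def gibbsMean (θ : E) : E →L[ℝ] ℝ :=
  ∑ a ∈ s, gibbsWeight s w ℓ θ a • ℓ a

variable {s w ℓ}

theorem partitionFunction_pos (hs : s.Nonempty) (hw : ∀ a ∈ s, 0 < w a) (θ : E) :
    0 < partitionFunction s w ℓ θ :=
  Finset.sum_pos (fun a ha => mul_pos (hw a ha) (exp_pos _)) hs

theorem gibbsWeight_pos (hw : ∀ a ∈ s, 0 < w a) (θ : E) {a : α} (ha : a ∈ s) :
    0 < gibbsWeight s w ℓ θ a :=
  div_pos (mul_pos (hw a ha) (exp_pos _)) (partitionFunction_pos ⟨a, ha⟩ hw θ)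

theorem sum_gibbsWeight {θ : E} (hZ : partitionFunction s w ℓ θ ≠ 0) :
    ∑ a ∈ s, gibbsWeight s w ℓ θ a = 1 := by
  simp only [gibbsWeight, ← Finset.sum_div]
  exact div_self hZ

theorem hasFDerivAt_mul_exp (r : ℝ) (L : E →L[ℝ] ℝ) (θ : E) :
    HasFDerivAt (fun θ => r * exp (L θ)) ((r * exp (L θ)) • L) θ := by
  simpa only [smul_smul] using (L.hasFDerivAt (x := θ)).exp.const_mul r

theorem hasFDerivAt_partitionFunction {θ : E} (hZ : partitionFunction s w ℓ θ ≠ 0) :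
    HasFDerivAt (partitionFunction s w ℓ)
      (partitionFunction s w ℓ θ • gibbsMean s w ℓ θ) θ := by
  have hsum : HasFDerivAt (partitionFunction s w ℓ) (∑ a ∈ s, (w a * exp (ℓ a θ)) • ℓ a) θ :=
    HasFDerivAt.fun_sum fun a _ => hasFDerivAt_mul_exp (w a) (ℓ a) θ
  simpa only [gibbsMean, gibbsWeight, Finset.smul_sum, smul_smul, mul_div_cancel₀ _ hZ] using hsum

theorem hasFDerivAt_log_partitionFunction {θ : E} (hZ : partitionFunction s w ℓ θ ≠ 0) :
    HasFDerivAt (fun θ => log (partitionFunction s w ℓ θ)) (gibbsMean s w ℓ θ) θ := by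
  simpa only [smul_smul, inv_mul_cancel₀ hZ, one_smul] using
    (hasFDerivAt_partitionFunction hZ).log hZ

theorem hasFDerivAt_gibbsWeight {θ : E} (hZ : partitionFunction s w ℓ θ ≠ 0) (a : α) :
    HasFDerivAt (fun θ => gibbsWeight s w ℓ θ a)
      (gibbsWeight s w ℓ θ a • (ℓ a - gibbsMean s w ℓ θ)) θ := by
  have hinv := (hasDerivAt_inv hZ).comp_hasFDerivAt θ (hasFDerivAt_partitionFunction hZ)
  refine ((hasFDerivAt_mul_exp (w a) (ℓ a) θ).fun_mul hinv).congr_fderiv ?_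
  ext u
  simp only [gibbsWeight, Function.comp_apply, smul_apply, sub_apply, add_apply, smul_eq_mul]
  field_simp
  ring

theorem sum_gibbsWeight_mul_sub_gibbsMean {θ : E} (hZ : partitionFunction s w ℓ θ ≠ 0) (u : E) :
    ∑ a ∈ s, gibbsWeight s w ℓ θ a * (ℓ a - gibbsMean s w ℓ θ) u = 0 := by
  simp only [sub_apply, mul_sub, Finset.sum_sub_distrib, ← Finset.sum_mul, sum_gibbsWeight hZ,
    one_mul]
  simp only [gibbsMean, sum_apply, smul_apply, smul_eq_mul, sub_self]

theorem fderiv_gibbsMean_apply {θ : E} (hZ : partitionFunction s w ℓ θ ≠ 0) (u v : E) :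
    fderiv ℝ (fun θ' => gibbsMean s w ℓ θ' v) θ u =
      ∑ a ∈ s, gibbsWeight s w ℓ θ a *
        ((ℓ a - gibbsMean s w ℓ θ) u * (ℓ a - gibbsMean s w ℓ θ) v) := by
  have hmean : HasFDerivAt (fun θ' => gibbsMean s w ℓ θ' v)
      (∑ a ∈ s, ℓ a v • (gibbsWeight s w ℓ θ a • (ℓ a - gibbsMean s w ℓ θ))) θ := by
    have hcoord (θ') : gibbsMean s w ℓ θ' v = ∑ a ∈ s, gibbsWeight s w ℓ θ' a * ℓ a v := by
      simp only [gibbsMean, sum_apply, smul_apply, smul_eq_mul]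
    simp only [hcoord]
    exact HasFDerivAt.fun_sum fun a _ => (hasFDerivAt_gibbsWeight hZ a).mul_const (ℓ a v)
  calc
    _ = ∑ a ∈ s, gibbsWeight s w ℓ θ a * (ℓ a - gibbsMean s w ℓ θ) u * ℓ a v := by
      simp only [hmean.fderiv, sum_apply, smul_apply, smul_eq_mul, mul_comm]
    _ = ∑ a ∈ s, gibbsWeight s w ℓ θ a * (ℓ a - gibbsMean s w ℓ θ) u * ℓ a v -
          (∑ a ∈ s, gibbsWeight s w ℓ θ a * (ℓ a - gibbsMean s w ℓ θ) u) *
            gibbsMean s w ℓ θ v := by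
      rw [sum_gibbsWeight_mul_sub_gibbsMean hZ, zero_mul, sub_zero]
    _ = _ := by
      rw [Finset.sum_mul, ← Finset.sum_sub_distrib]
      refine Finset.sum_congr rfl fun a _ => ?_
      rw [← mul_sub, mul_assoc, sub_apply (ℓ a) _ v]

theorem fderiv_fderiv_log_partitionFunction (hs : s.Nonempty) (hw : ∀ a ∈ s, 0 < w a)
    (θ u v : E) :
    fderiv ℝ (fun θ' => fderiv ℝ (fun θ => log (partitionFunction s w ℓ θ)) θ' v) θ u =
      ∑ a ∈ s, gibbsWeight s w ℓ θ a *
        ((ℓ a - gibbsMean s w ℓ θ) u * (ℓ a - gibbsMean s w ℓ θ) v) := by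
  have hZ (θ) : partitionFunction s w ℓ θ ≠ 0 := (partitionFunction_pos hs hw θ).ne'
  simp only [(hasFDerivAt_log_partitionFunction (hZ _)).fderiv]
  exact fderiv_gibbsMean_apply (hZ θ) u v

theorem one_add_mul_sum_exp_eq_partitionFunction {β : Type*} (t : Finset β) (r : ℝ)
    (L : β → E →L[ℝ] ℝ) (θ : E) :
    1 + r * ∑ b ∈ t, exp (L b θ) =
      partitionFunction (Finset.insertNone t) (fun a => a.elim 1 fun _ => r)
        (fun a => a.elim 0 L) θ := by
  simp only [partitionFunction, Finset.sum_insertNone, Option.elim_none, Option.elim_some,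
    zero_apply, exp_zero, mul_one, Finset.mul_sum]

end PartitionFunction

section SecondDerivatives

variable {E : Type*} [NormedAddCommGroup E] [NormedSpace ℝ E] {F : E → ℝ} {x : E}

theorem differentiableAt_fderiv_apply (hF : ContDiffAt ℝ 2 F x) (v : E) :
    DifferentiableAt ℝ (fun y => fderiv ℝ F y v) x :=
  ((hF.fderiv_right (m := 1) one_add_one_eq_two.le).differentiableAt one_ne_zero).clm_apply
    (differentiableAt_const v)

theorem fderiv_exp_const_mul_apply (hF : DifferentiableAt ℝ F x) (r : ℝ) (v : E) :
    fderiv ℝ (fun y => exp (r * F y)) x v = r * exp (r * F x) * fderiv ℝ F x v := by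
  rw [(hF.hasFDerivAt.const_mul r).exp.fderiv]
  simp only [smul_apply, smul_eq_mul]
  ring

theorem fderiv_fderiv_exp_const_mul (hF : ContDiffAt ℝ 2 F x) (r : ℝ) (u v : E) :
    fderiv ℝ (fun y => fderiv ℝ (fun z => exp (r * F z)) y v) x u =
      r * fderiv ℝ F x u * fderiv ℝ (fun z => exp (r * F z)) x v +
        r * exp (r * F x) * fderiv ℝ (fun y => fderiv ℝ F y v) x u := by
  have hd : DifferentiableAt ℝ F x := hF.differentiableAt two_ne_zero
  have hfirst : (fun y => fderiv ℝ (fun z => exp (r * F z)) y v) =ᶠ[nhds x]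
      fun y => r * exp (r * F y) * fderiv ℝ F y v := by
    filter_upwards [hF.eventually (by decide)] with y hy
    exact fderiv_exp_const_mul_apply (hy.differentiableAt two_ne_zero) r v
  have hexp : DifferentiableAt ℝ (fun y => r * exp (r * F y)) x :=
    ((hd.const_mul r).exp).const_mul r
  rw [hfirst.fderiv_eq, fderiv_fun_mul hexp (differentiableAt_fderiv_apply hF v),
    fderiv_const_mul (hd.const_mul r).exp]
  simp only [add_apply, smul_apply, smul_eq_mul, fderiv_exp_const_mul_apply hd]
  ring

theorem fderiv_fderiv_sum {κ : Type*} {t : Finset κ} {g : κ → E → ℝ}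
    (hg : ∀ m ∈ t, ContDiffAt ℝ 2 (g m) x) (u v : E) :
    fderiv ℝ (fun y => fderiv ℝ (fun z => ∑ m ∈ t, g m z) y v) x u =
      ∑ m ∈ t, fderiv ℝ (fun y => fderiv ℝ (g m) y v) x u := by
  have hfirst : (fun y => fderiv ℝ (fun z => ∑ m ∈ t, g m z) y v) =ᶠ[nhds x]
      fun y => ∑ m ∈ t, fderiv ℝ (g m) y v := by
    filter_upwards [(Filter.eventually_all_finset t).2 fun m hm => (hg m hm).eventually (by decide)]
      with y hy
    rw [fderiv_fun_sum fun m hm => (hy m hm).differentiableAt two_ne_zero, sum_apply]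
  rw [hfirst.fderiv_eq, fderiv_fun_sum fun m hm => differentiableAt_fderiv_apply (hg m hm) v,
    sum_apply]

end SecondDerivatives

section MatrixLaplacian

variable {ι : Type*} [Fintype ι] [DecidableEq ι] {M : Matrix ι ι ℝ}

/-- The constant-coefficient second-order operator `∑ᵢⱼ Mᵢⱼ ∂ᵢ∂ⱼ`, applied to `g` at `θ`. For the
inverse of a constant metric it is the Laplace–Beltrami operator. -/
noncomputable def matrixLaplacian (M : Matrix ι ι ℝ) (g : (ι → ℝ) → ℝ) (θ : ι → ℝ) : ℝ :=
  ∑ i, ∑ j, M i j * fderiv ℝ (fun θ' => fderiv ℝ g θ' (Pi.single j 1)) θ (Pi.single i 1)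

theorem matrixLaplacian_sum {κ : Type*} {t : Finset κ} {g : κ → (ι → ℝ) → ℝ} {θ : ι → ℝ}
    (hg : ∀ m ∈ t, ContDiffAt ℝ 2 (g m) θ) :
    matrixLaplacian M (fun θ' => ∑ m ∈ t, g m θ') θ = ∑ m ∈ t, matrixLaplacian M (g m) θ := by
  simp only [matrixLaplacian, fderiv_fderiv_sum hg, Finset.mul_sum]
  rw [Finset.sum_comm (s := t)]
  exact Finset.sum_congr rfl fun i _ => Finset.sum_comm

theorem sum_sum_mul_fderiv_fderiv_exp_neg_half {F : (ι → ℝ) → ℝ} {θ : ι → ℝ}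
    (hF : ContDiffAt ℝ 2 F θ) :
    ∑ i, ∑ j, M i j *
        (fderiv ℝ (fun θ' => fderiv ℝ (fun y => exp (-(F y) / 2)) θ' (Pi.single j 1)) θ
            (Pi.single i 1) +
          (1 / 2 : ℝ) * fderiv ℝ F θ (Pi.single i 1) *
            fderiv ℝ (fun y => exp (-(F y) / 2)) θ (Pi.single j 1)) =
      -(1 / 2) * exp (-(F θ) / 2) * matrixLaplacian M F θ := by
  have hhalf (y) : -(F y) / 2 = -(1 / 2) * F y := by ring
  simp only [hhalf, fderiv_fderiv_exp_const_mul hF, matrixLaplacian, Finset.mul_sum]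
  exact Finset.sum_congr rfl fun i _ => Finset.sum_congr rfl fun j _ => by ring

variable {α : Type*} {s : Finset α} {w : α → ℝ} {ℓ : α → (ι → ℝ) →L[ℝ] ℝ}

theorem matrixLaplacian_log_partitionFunction (hs : s.Nonempty) (hw : ∀ a ∈ s, 0 < w a)
    (θ : ι → ℝ) :
    matrixLaplacian M (fun θ => log (partitionFunction s w ℓ θ)) θ =
      ∑ a ∈ s, gibbsWeight s w ℓ θ a *
        Matrix.toBilin' M (fun i => (ℓ a - gibbsMean s w ℓ θ) (Pi.single i 1))
          (fun i => (ℓ a - gibbsMean s w ℓ θ) (Pi.single i 1)) := by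
  simp only [matrixLaplacian, fderiv_fderiv_log_partitionFunction hs hw, Matrix.toBilin'_apply,
    Finset.mul_sum]
  rw [Finset.sum_comm (s := s)]
  refine Finset.sum_congr rfl fun i _ => ?_
  rw [Finset.sum_comm (s := s)]
  exact Finset.sum_congr rfl fun j _ => Finset.sum_congr rfl fun a _ => by ring

theorem matrixLaplacian_log_partitionFunction_nonneg (hM : M.PosSemidef) (hs : s.Nonempty)
    (hw : ∀ a ∈ s, 0 < w a) (θ : ι → ℝ) :
    0 ≤ matrixLaplacian M (fun θ => log (partitionFunction s w ℓ θ)) θ := by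
  rw [matrixLaplacian_log_partitionFunction hs hw]
  refine Finset.sum_nonneg fun a ha => mul_nonneg (gibbsWeight_pos hw θ ha).le ?_
  rw [Matrix.toBilin'_apply']
  exact hM.dotProduct_mulVec_nonneg _

theorem matrixLaplacian_log_partitionFunction_pos (hM : M.PosDef) (hw : ∀ a ∈ s, 0 < w a)
    {a b : α} (ha : a ∈ s) (hb : b ∈ s) (hab : ℓ a ≠ ℓ b) (θ : ι → ℝ) :
    0 < matrixLaplacian M (fun θ => log (partitionFunction s w ℓ θ)) θ := by
  obtain ⟨e, he, hne⟩ : ∃ e ∈ s, ℓ e - gibbsMean s w ℓ θ ≠ 0 := by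
    by_contra! h
    exact hab ((sub_eq_zero.mp (h a ha)).trans (sub_eq_zero.mp (h b hb)).symm)
  have hcoord : (fun i => (ℓ e - gibbsMean s w ℓ θ) (Pi.single i 1)) ≠ 0 := fun h =>
    hne (ContinuousLinearMap.coe_injective (LinearMap.pi_ext' fun i => by
      ext; exact congrFun h i))
  rw [matrixLaplacian_log_partitionFunction ⟨a, ha⟩ hw]
  simp only [Matrix.toBilin'_apply']
  exact Finset.sum_pos'
    (fun a ha => mul_nonneg (gibbsWeight_pos hw θ ha).le
      (hM.posSemidef.dotProduct_mulVec_nonneg _))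
    ⟨e, he, mul_pos (gibbsWeight_pos hw θ he) (hM.dotProduct_mulVec_pos hcoord)⟩

end MatrixLaplacian

section SumLogOneAdd

variable {E κ β : Type*} [NormedAddCommGroup E] [NormedSpace ℝ E]

theorem contDiff_log_one_add_mul_sum_exp {n : WithTop ℕ∞} {r : ℝ} (hr : 0 ≤ r) (t : Finset β)
    (L : β → E →L[ℝ] ℝ) : ContDiff ℝ n fun θ => log (1 + r * ∑ b ∈ t, exp (L b θ)) := by
  refine ContDiff.log (contDiff_const.add
    (contDiff_const.mul (ContDiff.sum fun b _ => (L b).contDiff.exp))) fun θ => ?_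
  positivity

variable {ι : Type*} [Fintype ι] [DecidableEq ι] {M : Matrix ι ι ℝ}

theorem matrixLaplacian_log_one_add_nonneg (hM : M.PosSemidef) {r : ℝ} (hr : 0 < r)
    (t : Finset β) (L : β → (ι → ℝ) →L[ℝ] ℝ) (θ : ι → ℝ) :
    0 ≤ matrixLaplacian M (fun θ => log (1 + r * ∑ b ∈ t, exp (L b θ))) θ := by
  simp only [one_add_mul_sum_exp_eq_partitionFunction]
  refine matrixLaplacian_log_partitionFunction_nonneg hM ⟨none, Finset.none_mem_insertNone⟩ ?_ θ
  rintro (_ | b) - <;> simp [hr]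

theorem matrixLaplacian_log_one_add_pos (hM : M.PosDef) {r : ℝ} (hr : 0 < r) {t : Finset β}
    {L : β → (ι → ℝ) →L[ℝ] ℝ} {b : β} (hb : b ∈ t) (hL : L b ≠ 0) (θ : ι → ℝ) :
    0 < matrixLaplacian M (fun θ => log (1 + r * ∑ b ∈ t, exp (L b θ))) θ := by
  simp only [one_add_mul_sum_exp_eq_partitionFunction]
  refine matrixLaplacian_log_partitionFunction_pos hM ?_ (Finset.some_mem_insertNone.2 hb)
    Finset.none_mem_insertNone hL θ
  rintro (_ | b) - <;> simp [hr]

end SumLogOneAdd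

section Model

variable {ι κ : Type*} [Fintype ι]

/-- The linear functional `θ ↦ log λ_k(θ) = ∑ i, c i k * θ i`. -/
noncomputable def logEigenvalue (c : ι → κ → ℝ) (k : κ) : (ι → ℝ) →L[ℝ] ℝ :=
  ∑ i, c i k • ContinuousLinearMap.proj i

theorem logEigenvalue_apply (c : ι → κ → ℝ) (k : κ) (θ : ι → ℝ) :
    logEigenvalue c k θ = ∑ i, c i k * θ i := by
  simp only [logEigenvalue, sum_apply, smul_apply, ContinuousLinearMap.proj_apply, smul_eq_mul]

theorem exp_logEigenvalue_sub (c : ι → κ → ℝ) (k l : κ) (θ : ι → ℝ) :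
    exp ((logEigenvalue c k - logEigenvalue c l) θ) =
      exp (∑ i, c i k * θ i) * (exp (∑ i, c i l * θ i))⁻¹ := by
  rw [sub_apply, logEigenvalue_apply, logEigenvalue_apply, sub_eq_add_neg, exp_add, exp_neg]

theorem logEigenvalue_single [DecidableEq ι] (c : ι → κ → ℝ) (k : κ) (i : ι) :
    logEigenvalue c k (Pi.single i 1) = c i k := by
  simp only [logEigenvalue_apply, Pi.single_apply, mul_ite, mul_one, mul_zero,
    Finset.sum_ite_eq', Finset.mem_univ, if_true]

theorem exists_ne_of_sum_eq_zero [Fintype κ] {g : κ → ℝ} (hsum : ∑ k, g k = 0) (hg : g ≠ 0) :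
    ∃ k l, g k ≠ g l := by
  by_contra! hconst
  obtain ⟨k, hk⟩ := Function.ne_iff.mp hg
  have : Nonempty κ := ⟨k⟩
  have hcard : Fintype.card κ * g k = 0 := by
    simpa [Finset.sum_congr rfl fun l _ => hconst l k] using hsum
  exact hk ((mul_eq_zero.mp hcard).resolve_left (Nat.cast_ne_zero.2 Fintype.card_ne_zero))

end Model

/-- With indices starting at `0`, the condition `k + l - 1 ≡ m (mod p)` defining `μ_m` reads
`k + l ≡ m (mod p)`. -/
theorem stmt_14_general {ι : Type*} [Fintype ι] [DecidableEq ι] {p : ℕ} {c : ι → Fin p → ℝ}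
    (hc : ∃ i k l, c i k ≠ c i l) {lam : (ι → ℝ) → Fin p → ℝ}
    (hlam : ∀ θ k, lam θ k = exp (∑ i, c i k * θ i)) {F : (ι → ℝ) → ℝ}
    (hF : ∀ θ, F θ = ∑ m : Fin p, log (1 + (1 / p : ℝ) *
      ∑ kl ∈ Finset.univ.filter
        (fun kl : Fin p × Fin p => ((kl.1 : ℕ) + (kl.2 : ℕ)) % p = (m : ℕ)),
        lam θ kl.1 * (lam θ kl.2)⁻¹))
    {G : Matrix ι ι ℝ} (hG : G.PosDef)
    {f : (ι → ℝ) → ℝ} (hf : ∀ θ, f θ = exp (-(F θ) / 2)) (θ : ι → ℝ) :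
    ∑ i, ∑ j, G⁻¹ i j *
      (fderiv ℝ (fun θ' => fderiv ℝ f θ' (Pi.single j 1)) θ (Pi.single i 1) +
        (1 / 2 : ℝ) * fderiv ℝ F θ (Pi.single i 1) * fderiv ℝ f θ (Pi.single j 1)) < 0 := by
  obtain ⟨i, k, l, hkl⟩ := hc
  have hp : 0 < p := k.pos
  have hr : (0 : ℝ) < 1 / p := by positivity
  have hL : logEigenvalue c k - logEigenvalue c l ≠ 0 := fun h => hkl <| by
    simpa only [logEigenvalue_single] using
      DFunLike.congr_fun (sub_eq_zero.mp h) (Pi.single i 1)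
  obtain rfl : f = fun θ => exp (-(F θ) / 2) := funext hf
  simp only [hlam, ← exp_logEigenvalue_sub] at hF
  obtain rfl := funext hF
  have hsmooth (m : Fin p) := (contDiff_log_one_add_mul_sum_exp (n := 2) hr.le
    (Finset.univ.filter fun kl : Fin p × Fin p => ((kl.1 : ℕ) + (kl.2 : ℕ)) % p = (m : ℕ))
    fun kl => logEigenvalue c kl.1 - logEigenvalue c kl.2).contDiffAt (x := θ)
  rw [sum_sum_mul_fderiv_fderiv_exp_neg_half (ContDiffAt.sum fun m _ => hsmooth m),
    matrixLaplacian_sum fun m _ => hsmooth m]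
  refine mul_neg_of_neg_of_pos (mul_neg_of_neg_of_pos (by norm_num) (exp_pos _)) ?_
  exact Finset.sum_pos'
    (fun m _ => matrixLaplacian_log_one_add_nonneg hG.inv.posSemidef hr _ _ θ)
    ⟨⟨(k + l) % p, Nat.mod_lt _ hp⟩, Finset.mem_univ _,
      matrixLaplacian_log_one_add_pos hG.inv hr (b := (k, l)) (by simp) hL θ⟩

/-- Superharmonicity of the shrinkage prior ratio `f = π_S/π_J = exp(-F/2)`:
for the log-linear family `log λ_k(θ) = ∑_i c_i^k θ_i` with `∑_k c_i^k = 0` and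
linearly independent rows, `F(θ) = ∑_m log(1 + μ_m(θ))`, and any constant
symmetric positive definite `G` (the `θ`-block of the Fisher metric),
`∑_{i,j} G^{ij}(∂_i∂_j f + (1/2)(∂_i F)(∂_j f)) < 0` everywhere. -/
theorem stmt_14 (p d : ℕ) (hp : 2 ≤ p) (hd : 1 ≤ d) (hdp : d ≤ p)
    (c : Fin d → Fin p → ℝ)
    (hc0 : ∀ i, ∑ k : Fin p, c i k = 0)
    (hindep : LinearIndependent ℝ c)
    (lam : (Fin d → ℝ) → Fin p → ℝ)
    (hlam : ∀ θ k, lam θ k = Real.exp (∑ i : Fin d, c i k * θ i))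
    (F : (Fin d → ℝ) → ℝ)
    (hF : ∀ θ, F θ = ∑ m : Fin p, Real.log (1 + (1 / p : ℝ) *
      ∑ kl ∈ Finset.univ.filter
        (fun kl : Fin p × Fin p => ((kl.1 : ℕ) + (kl.2 : ℕ)) % p = (m : ℕ)),
        lam θ kl.1 * (lam θ kl.2)⁻¹))
    (G : Matrix (Fin d) (Fin d) ℝ) (hG : G.PosDef)
    (f : (Fin d → ℝ) → ℝ) (hfdef : ∀ θ, f θ = Real.exp (-(F θ) / 2)) :
    ∀ θ : Fin d → ℝ,
      ∑ i : Fin d, ∑ j : Fin d, G⁻¹ i j *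
        (fderiv ℝ (fun θ' => fderiv ℝ f θ' (Pi.single j 1)) θ (Pi.single i 1) +
          (1 / 2 : ℝ) * fderiv ℝ F θ (Pi.single i 1) *
            fderiv ℝ f θ (Pi.single j 1)) < 0 := by
  obtain ⟨k, l, hkl⟩ := exists_ne_of_sum_eq_zero (hc0 ⟨0, hd⟩) (hindep.ne_zero ⟨0, hd⟩)
  exact stmt_14_general ⟨⟨0, hd⟩, k, l, hkl⟩ hlam hF hG hfdef
end

section
/- For the exchangeable model λ(θ) = (e^{−(p−1)θ}, e^{θ}, …, e^{θ}) with R(θ) = Q D_{λ(θ)} Q*, one has det( I_p + R(θ) ∘ R(θ)^{−1} ) = 2 · ( (1/p)(2 sinh(pθ/2))² + 2 )^{p−1}, and the θ-component of the Fisher metric equals (1/2) ∑_{k=1}^p ( d log λ_k/dθ )² = p(p−1)/2. -/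
open Matrix Complex

/-!
Conjugation by a unitary `Q` with a constant column, such as the Fourier matrix, sends
`diag(a, b, …, b)`, with `a` at that column, to the matrix acting as `a` on constant vectors and as
`b` on vectors with zero sum, that is `b I + ((a - b) / n) J` with `J` the all-ones matrix. These
matrices are closed under sums, inverses and Hadamard products. For `I + R ∘ R⁻¹` the eigenvalue on
constant vectors is `2`, because `R` is symmetric, so that the rows of `R ∘ R⁻¹` sum to the diagonal
entries of `R (R⁻¹)ᵀ = R R⁻¹ = I`; the other eigenvalue is `(b / a + a / b - 2) / n + 2`.
-/

/-- The exchangeable (compound symmetry) matrix `b I + ((a - b) / card n) J`, where `J` is the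
all-ones matrix, parametrized by its spectrum: it has eigenvalue `a` on constant vectors and `b` on
vectors whose entries sum to zero, provided that `card n` is nonzero in `K`. -/
def exchangeableMatrix {K : Type*} (n : Type*) [Field K] [Fintype n] [DecidableEq n] (a b : K) :
    Matrix n n K :=
  b • 1 + of fun _ _ => (a - b) / Fintype.card n

namespace exchangeableMatrix

variable {K n : Type*} [Field K] [Fintype n] [DecidableEq n]

theorem apply_eq_ite (a b : K) (i j : n) :
    exchangeableMatrix n a b i j = (if i = j then b else 0) + (a - b) / Fintype.card n := by
  simp [exchangeableMatrix, one_apply]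

theorem one_one : exchangeableMatrix n (1 : K) 1 = 1 := by
  ext i j
  simp [apply_eq_ite, one_apply]

theorem add (a b c d : K) :
    exchangeableMatrix n a b + exchangeableMatrix n c d = exchangeableMatrix n (a + c) (b + d) := by
  ext i j
  simp only [Matrix.add_apply, apply_eq_ite]
  split_ifs <;> ring

theorem mul (hn : (Fintype.card n : K) ≠ 0) (a b c d : K) :
    exchangeableMatrix n a b * exchangeableMatrix n c d = exchangeableMatrix n (a * c) (b * d) := by
  ext i j
  simp only [Matrix.mul_apply, apply_eq_ite, add_mul, mul_add, Finset.sum_add_distrib, ite_mul,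
    mul_ite, zero_mul, mul_zero, Finset.sum_ite_eq, Finset.sum_ite_eq', Finset.mem_univ, if_true,
    Finset.sum_const, Finset.card_univ, nsmul_eq_mul]
  split_ifs <;> field_simp <;> ring

theorem inv (hn : (Fintype.card n : K) ≠ 0) {a b : K} (ha : a ≠ 0) (hb : b ≠ 0) :
    (exchangeableMatrix n a b)⁻¹ = exchangeableMatrix n a⁻¹ b⁻¹ :=
  inv_eq_right_inv <| by rw [mul hn, mul_inv_cancel₀ ha, mul_inv_cancel₀ hb, one_one]

theorem hadamard_inv (hn : (Fintype.card n : K) ≠ 0) {a b : K} (ha : a ≠ 0) (hb : b ≠ 0) :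
    exchangeableMatrix n a b ⊙ (exchangeableMatrix n a b)⁻¹ =
      exchangeableMatrix n 1 ((b / a + a / b - 2) / Fintype.card n + 1) := by
  rw [inv hn ha hb]
  ext i j
  simp only [hadamard_apply, apply_eq_ite]
  split_ifs <;> field_simp <;> ring

theorem det (hn : (Fintype.card n : K) ≠ 0) (a b : K) :
    (exchangeableMatrix n a b).det = a * b ^ (Fintype.card n - 1) := by
  have rank_one_update : exchangeableMatrix n a b =
      scalar n b - vecMulVec (fun _ => (b - a) / Fintype.card n) 1 := by
    ext i j
    simp only [apply_eq_ite, Matrix.sub_apply, scalar_apply, diagonal_apply, vecMulVec_apply,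
      Pi.one_apply]
    ring
  obtain ⟨m, hm⟩ : ∃ m, Fintype.card n = m + 1 :=
    Nat.exists_eq_succ_of_ne_zero fun h => hn (by rw [h, Nat.cast_zero])
  have trace_update : (fun _ : n => (b - a) / (Fintype.card n : K)) ⬝ᵥ 1 = b - a := by
    simp [dotProduct, mul_div_cancel₀ _ hn]
  rw [rank_one_update, ← eval_charpoly, charpoly_vecMulVec, trace_update, hm]
  simp only [Polynomial.eval_sub, Polynomial.eval_pow, Polynomial.eval_X, Polynomial.eval_smul,
    smul_eq_mul, Nat.add_sub_cancel]
  ring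

theorem det_one_add_hadamard_inv (hn : (Fintype.card n : K) ≠ 0) {a b : K} (ha : a ≠ 0)
    (hb : b ≠ 0) :
    (1 + exchangeableMatrix n a b ⊙ (exchangeableMatrix n a b)⁻¹).det =
      2 * ((b / a + a / b - 2) / Fintype.card n + 2) ^ (Fintype.card n - 1) := by
  rw [hadamard_inv hn ha hb, ← one_one, add, det hn]
  ring

end exchangeableMatrix

section UnitaryDiagonalization

variable {n : Type*} [Fintype n] [DecidableEq n] {i₀ : n}

theorem card_mul_mul_star_of_const_col {K : Type*} [CommRing K] [StarRing K] {Q : Matrix n n K}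
    (hQ : Q * Qᴴ = 1) (hcol : ∀ j k, Q j i₀ = Q k i₀) (j k : n) :
    Fintype.card n * (Q j i₀ * star (Q k i₀)) = 1 := by
  calc (Fintype.card n : K) * (Q j i₀ * star (Q k i₀))
      = ∑ l, star (Q l i₀) * Q l i₀ := by
        simp [hcol _ i₀, mul_comm]
    _ = (Qᴴ * Q) i₀ i₀ := by simp [Matrix.mul_apply]
    _ = 1 := by rw [mul_eq_one_comm.1 hQ, one_apply_eq]

theorem mul_diagonal_mul_conjTranspose_eq_exchangeableMatrix {K : Type*} [Field K] [StarRing K]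
    {Q : Matrix n n K} (hQ : Q * Qᴴ = 1) (hcol : ∀ j k, Q j i₀ = Q k i₀) {v : n → K} {b : K}
    (hv : ∀ k, k ≠ i₀ → v k = b) :
    Q * diagonal v * Qᴴ = exchangeableMatrix n (v i₀) b := by
  ext j l
  have hcard := card_mul_mul_star_of_const_col hQ hcol j l
  have hterm (k : n) : Q j k * v k * star (Q l k) =
      b * (Q j k * star (Q l k)) +
        if k = i₀ then (v i₀ - b) * (Q j i₀ * star (Q l i₀)) else 0 := by
    split_ifs with hk
    · rw [hk]; ring
    · rw [hv k hk]; ring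
  calc (Q * diagonal v * Qᴴ) j l
      = b * (Q * Qᴴ) j l + (v i₀ - b) * (Q j i₀ * star (Q l i₀)) := by
        simp [Matrix.mul_apply (N := Qᴴ), mul_diagonal, hterm, Finset.sum_add_distrib,
          Finset.mul_sum]
    _ = exchangeableMatrix n (v i₀) b j l := by
        rw [hQ, eq_one_div_of_mul_eq_one_right hcard, exchangeableMatrix.apply_eq_ite, one_apply,
          mul_ite, mul_one, mul_zero, mul_one_div]

end UnitaryDiagonalization

section FourierMatrix

variable {p : ℕ} {ω : ℂ}

theorem sum_pow_div_pow_primitiveRoot {K : Type*} [Field K] {ζ : K} (hζ : IsPrimitiveRoot ζ p)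
    (j l : Fin p) :
    ∑ k : Fin p, (ζ ^ (j : ℕ) / ζ ^ (l : ℕ)) ^ (k : ℕ) = if j = l then (p : K) else 0 := by
  have hζ0 : ζ ≠ 0 := hζ.ne_zero j.pos.ne'
  rw [Fin.sum_univ_eq_sum_range fun k => (ζ ^ (j : ℕ) / ζ ^ (l : ℕ)) ^ k]
  split_ifs with hjl
  · simp [hjl, hζ0]
  · have ratio_ne_one : ζ ^ (j : ℕ) / ζ ^ (l : ℕ) ≠ 1 := fun h =>
      hjl (Fin.ext (hζ.pow_inj j.2 l.2 (eq_of_div_eq_one h)))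
    have ratio_pow : (ζ ^ (j : ℕ) / ζ ^ (l : ℕ)) ^ p = 1 := by
      rw [div_pow, pow_right_comm, hζ.pow_eq_one, pow_right_comm, hζ.pow_eq_one, one_pow, one_pow,
        div_one]
    rw [geom_sum_eq ratio_ne_one, ratio_pow, sub_self, zero_div]

theorem fourierMatrix_mul_conjTranspose (hω : IsPrimitiveRoot ω p) :
    fourierMatrix p ω * (fourierMatrix p ω)ᴴ = 1 := by
  ext j l
  have hp0 : p ≠ 0 := j.pos.ne'
  have star_ω : star ω = ω⁻¹ := (inv_eq_conj (hω.norm'_eq_one hp0)).symm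
  have sqrt_mul_sqrt : (Real.sqrt p : ℂ) * Real.sqrt p = p := by
    rw [← ofReal_mul, Real.mul_self_sqrt p.cast_nonneg, ofReal_natCast]
  have star_sqrt : star (Real.sqrt p : ℂ) = Real.sqrt p := conj_ofReal _
  calc (fourierMatrix p ω * (fourierMatrix p ω)ᴴ) j l
      = ∑ k : Fin p, (ω ^ (j : ℕ) / ω ^ (l : ℕ)) ^ (k : ℕ) / p := by
        simp only [Matrix.mul_apply, conjTranspose_apply, fourierMatrix, of_apply, star_div₀,
          star_pow, star_ω, star_sqrt, div_mul_div_comm, sqrt_mul_sqrt, div_pow, ← pow_mul, inv_pow,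
          ← div_eq_mul_inv]
    _ = (1 : Matrix (Fin p) (Fin p) ℂ) j l := by
        rw [← Finset.sum_div, sum_pow_div_pow_primitiveRoot hω, one_apply, ite_div, zero_div,
          div_self (Nat.cast_ne_zero.2 hp0)]

theorem fourierMatrix_apply_zero [NeZero p] (ω : ℂ) (j : Fin p) :
    fourierMatrix p ω j 0 = 1 / Real.sqrt p := by
  simp [fourierMatrix]

end FourierMatrix

theorem exp_div_exp_add_exp_div_exp_sub_two (x y : ℝ) :
    Real.exp x / Real.exp y + Real.exp y / Real.exp x - 2 = (2 * Real.sinh ((x - y) / 2)) ^ 2 := by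
  calc Real.exp x / Real.exp y + Real.exp y / Real.exp x - 2
      = 2 * Real.cosh (2 * ((x - y) / 2)) - 2 := by
        rw [← Real.exp_sub, ← Real.exp_sub, mul_div_cancel₀ _ two_ne_zero, Real.cosh_eq, neg_sub]
        ring
    _ = (2 * Real.sinh ((x - y) / 2)) ^ 2 := by
        rw [Real.cosh_two_mul, Real.cosh_sq]
        ring

theorem deriv_log_of_eq_exp {f : ℝ → ℝ} {c : ℝ} (hf : ∀ t, f t = Real.exp (c * t)) (θ : ℝ) :
    deriv (fun t => Real.log (f t)) θ = c := by
  simp [hf]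

theorem sum_eq_add_card_sub_one_mul {n R : Type*} [Fintype n] [Ring R] {f : n → R}
    {i₀ : n} {c : R} (hf : ∀ k, k ≠ i₀ → f k = c) :
    ∑ k, f k = f i₀ + ((Fintype.card n : R) - 1) * c := by
  have hsum : ∑ k, (f k - c) = f i₀ - c :=
    Fintype.sum_eq_single i₀ fun k hk => sub_eq_zero.2 (hf k hk)
  rw [Finset.sum_sub_distrib, Finset.sum_const, Finset.card_univ, nsmul_eq_mul] at hsum
  rw [sub_one_mul, ← add_sub_assoc, add_sub_right_comm, ← hsum, sub_add_cancel]

section ExchangeableModel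

variable {n : Type*} [Fintype n] {i₀ : n}

theorem det_one_add_hadamard_inv_eq_sinh [DecidableEq n] {𝕜 : Type*} [RCLike 𝕜]
    {Q : Matrix n n 𝕜} (hQ : Q * Qᴴ = 1) (hcol : ∀ j k, Q j i₀ = Q k i₀) {v : n → ℝ} {x y : ℝ}
    (hv0 : v i₀ = Real.exp y) (hvk : ∀ k, k ≠ i₀ → v k = Real.exp x) {R : Matrix n n 𝕜}
    (hR : R = Q * diagonal (fun k => (v k : 𝕜)) * Qᴴ) :
    (1 + R ⊙ R⁻¹).det =
      ((2 * ((1 / Fintype.card n) * (2 * Real.sinh ((x - y) / 2)) ^ 2 + 2) ^ (Fintype.card n - 1) :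
        ℝ) : 𝕜) := by
  have hn : (Fintype.card n : 𝕜) ≠ 0 :=
    left_ne_zero_of_mul_eq_one (card_mul_mul_star_of_const_col hQ hcol i₀ i₀)
  have exp_ne_zero (z : ℝ) : (Real.exp z : 𝕜) ≠ 0 := RCLike.ofReal_ne_zero.2 (Real.exp_ne_zero z)
  rw [hR, mul_diagonal_mul_conjTranspose_eq_exchangeableMatrix hQ hcol (b := (Real.exp x : 𝕜))
    fun k hk => by rw [hvk k hk], hv0, exchangeableMatrix.det_one_add_hadamard_inv hn
    (exp_ne_zero y) (exp_ne_zero x), ← exp_div_exp_add_exp_div_exp_sub_two, one_div_mul_eq_div]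
  push_cast
  rfl

theorem half_sum_sq_deriv_log_of_exchangeable {lam : ℝ → n → ℝ}
    (hlam0 : ∀ t, lam t i₀ = Real.exp (-((Fintype.card n : ℝ) - 1) * t))
    (hlamk : ∀ t k, k ≠ i₀ → lam t k = Real.exp t) (θ : ℝ) :
    (1 / 2 : ℝ) * ∑ k, (deriv (fun t => Real.log (lam t k)) θ) ^ 2 =
      (Fintype.card n : ℝ) * ((Fintype.card n : ℝ) - 1) / 2 := by
  have deriv_off (k : n) (hk : k ≠ i₀) : (deriv (fun t => Real.log (lam t k)) θ) ^ 2 = 1 := by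
    rw [deriv_log_of_eq_exp (c := 1) fun t => by rw [hlamk t k hk, one_mul], one_pow]
  rw [sum_eq_add_card_sub_one_mul deriv_off, deriv_log_of_eq_exp hlam0]
  ring

theorem stmt_16_general [DecidableEq n] {𝕜 : Type*} [RCLike 𝕜] {Q : Matrix n n 𝕜} (hQ : Q * Qᴴ = 1)
    (hcol : ∀ j k, Q j i₀ = Q k i₀) {lam : ℝ → n → ℝ}
    (hlam0 : ∀ t, lam t i₀ = Real.exp (-((Fintype.card n : ℝ) - 1) * t))
    (hlamk : ∀ t k, k ≠ i₀ → lam t k = Real.exp t) {R : ℝ → Matrix n n 𝕜}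
    (hR : ∀ t, R t = Q * diagonal (fun k => (lam t k : 𝕜)) * Qᴴ) (θ : ℝ) :
    (1 + R θ ⊙ (R θ)⁻¹).det =
      ((2 * ((1 / Fintype.card n) * (2 * Real.sinh ((Fintype.card n : ℝ) * θ / 2)) ^ 2 + 2) ^
        (Fintype.card n - 1) : ℝ) : 𝕜) ∧
    (1 / 2 : ℝ) * ∑ k, (deriv (fun t => Real.log (lam t k)) θ) ^ 2 =
      (Fintype.card n : ℝ) * ((Fintype.card n : ℝ) - 1) / 2 := by
  have log_ratio : θ - -((Fintype.card n : ℝ) - 1) * θ = Fintype.card n * θ := by ring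
  refine ⟨?_, half_sum_sq_deriv_log_of_exchangeable hlam0 hlamk θ⟩
  rw [det_one_add_hadamard_inv_eq_sinh hQ hcol (hlam0 θ) (hlamk θ) (hR θ), log_ratio]

end ExchangeableModel

/-- Exchangeable model `λ(θ) = (e^{-(p-1)θ}, e^θ, …, e^θ)`:
`det(I_p + R(θ) ∘ R(θ)⁻¹) = 2((1/p)(2 sinh(pθ/2))² + 2)^{p-1}` and the
`θ`-component of the Fisher metric is
`(1/2) ∑_k (d log λ_k/dθ)² = p(p-1)/2`. -/
theorem stmt_16 (p : ℕ) (hp : 2 ≤ p) [NeZero p]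
    (ω : ℂ) (hω : ω = Complex.exp (2 * Real.pi * Complex.I / p))
    (Q : Matrix (Fin p) (Fin p) ℂ)
    (hQ : ∀ j k : Fin p, Q j k = ω ^ ((j : ℕ) * (k : ℕ)) / Real.sqrt p)
    (lam : ℝ → Fin p → ℝ)
    (hlam0 : ∀ t, lam t 0 = Real.exp (-((p : ℝ) - 1) * t))
    (hlamk : ∀ t (k : Fin p), k ≠ 0 → lam t k = Real.exp t)
    (R : ℝ → Matrix (Fin p) (Fin p) ℂ)
    (hR : ∀ t, R t = Q * Matrix.diagonal (fun k => (lam t k : ℂ)) * Qᴴ)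
    (θ : ℝ) :
    (1 + Matrix.hadamard (R θ) (R θ)⁻¹).det =
      ((2 * ((1 / p) * (2 * Real.sinh ((p : ℝ) * θ / 2)) ^ 2 + 2) ^ (p - 1) : ℝ) : ℂ) ∧
    (1 / 2 : ℝ) * ∑ k : Fin p, (deriv (fun t => Real.log (lam t k)) θ) ^ 2 =
      (p : ℝ) * ((p : ℝ) - 1) / 2 := by
  obtain rfl : Q = fourierMatrix p ω := Matrix.ext hQ
  have hprim : IsPrimitiveRoot ω p := hω ▸ isPrimitiveRoot_exp p (NeZero.ne p)
  have hcol (j k : Fin p) : fourierMatrix p ω j 0 = fourierMatrix p ω k 0 := by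
    rw [fourierMatrix_apply_zero, fourierMatrix_apply_zero]
  have hcard : Fintype.card (Fin p) = p := Fintype.card_fin p
  simpa only [hcard, RCLike.ofReal_eq_complex_ofReal] using
    stmt_16_general (fourierMatrix_mul_conjTranspose hprim) hcol
      (by simpa only [hcard] using hlam0) hlamk hR θ
end

section
/- Let p ≥ 2 and define M(θ) = (p−1) log( (1/p)(2 sinh(pθ/2))² + 2 ) for θ ∈ ℝ. Then M'(θ) = (p−1) · 4 sinh(pθ/2) cosh(pθ/2) / ( (4/p) sinh²(pθ/2) + 2 ), and as θ → ∞, M'(θ) → p(p−1) and M''(θ) → 0. -/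
open Filter

/-!
The half-angle formula `2 sinh² (x / 2) = cosh x - 1` turns the argument of the logarithm into
`(2 / p) (cosh (p θ) + (p - 1))`. Everything thus reduces to `x ↦ log (cosh x + c)`, whose first two
derivatives are `sinh x / (cosh x + c)` and `(1 + c cosh x) / (cosh x + c)²`. In terms of
`u = cosh x + c → ∞` these equal `1 - (e⁻ˣ + c) / u → 1` and `(1 - c²) / u² + c / u → 0`.
-/

section LogCoshAdd

open Real Topology

variable {a c x : ℝ}

lemma hasDerivAt_log_cosh_add (h : cosh x + c ≠ 0) :
    HasDerivAt (fun y => log (cosh y + c)) (sinh x / (cosh x + c)) x :=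
  ((hasDerivAt_cosh x).add_const c).log h

lemma hasDerivAt_sinh_div_cosh_add (h : cosh x + c ≠ 0) :
    HasDerivAt (fun y => sinh y / (cosh y + c))
      ((1 + c * cosh x) / (cosh x + c) ^ 2) x := by
  refine ((hasDerivAt_sinh x).fun_div ((hasDerivAt_cosh x).add_const c) h).congr_deriv ?_
  congr 1
  linear_combination cosh_sq_sub_sinh_sq x

lemma deriv_log_cosh_mul_add (h : cosh (a * x) + c ≠ 0) :
    deriv (fun y => log (cosh (a * y) + c)) x = a * (sinh (a * x) / (cosh (a * x) + c)) := by
  rw [deriv_comp_mul_left a (fun y => log (cosh y + c)), (hasDerivAt_log_cosh_add h).deriv,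
    smul_eq_mul]

lemma deriv_sinh_mul_div_cosh_mul_add (h : cosh (a * x) + c ≠ 0) :
    deriv (fun y => sinh (a * y) / (cosh (a * y) + c)) x =
      a * ((1 + c * cosh (a * x)) / (cosh (a * x) + c) ^ 2) := by
  rw [deriv_comp_mul_left a (fun y => sinh y / (cosh y + c)),
    (hasDerivAt_sinh_div_cosh_add h).deriv, smul_eq_mul]

lemma tendsto_cosh_atTop : Tendsto cosh atTop atTop := by
  refine tendsto_atTop_mono (fun y => ?_) (tendsto_exp_atTop.atTop_div_const two_pos)
  rw [cosh_eq]
  gcongr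
  exact le_add_of_nonneg_right (exp_nonneg _)

lemma tendsto_cosh_add_atTop (c : ℝ) : Tendsto (fun y => cosh y + c) atTop atTop :=
  tendsto_atTop_add_const_right _ c tendsto_cosh_atTop

lemma tendsto_sinh_div_cosh_add_atTop (c : ℝ) :
    Tendsto (fun y => sinh y / (cosh y + c)) atTop (𝓝 1) := by
  have hratio : Tendsto (fun y => (exp (-y) + c) / (cosh y + c)) atTop (𝓝 0) :=
    (tendsto_exp_neg_atTop_nhds_zero.add_const c).div_atTop (tendsto_cosh_add_atTop c)
  have hlim : Tendsto (fun y => 1 - (exp (-y) + c) / (cosh y + c)) atTop (𝓝 1) := by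
    simpa using hratio.const_sub 1
  refine hlim.congr' ?_
  filter_upwards [(tendsto_cosh_add_atTop c).eventually_ne_atTop 0] with y hy
  rw [one_sub_div hy, ← cosh_sub_sinh]
  ring

lemma tendsto_one_add_mul_cosh_div_sq_atTop (c : ℝ) :
    Tendsto (fun y => (1 + c * cosh y) / (cosh y + c) ^ 2) atTop (𝓝 0) := by
  have hu := tendsto_cosh_add_atTop c
  have hu_sq : Tendsto (fun y => (cosh y + c) ^ 2) atTop atTop :=
    (tendsto_pow_atTop two_ne_zero).comp hu
  have hlim : Tendsto (fun y => (1 - c ^ 2) / (cosh y + c) ^ 2 + c / (cosh y + c))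
      atTop (𝓝 0) := by
    simpa using (hu_sq.const_div_atTop (1 - c ^ 2)).add (hu.const_div_atTop c)
  refine hlim.congr' ?_
  filter_upwards [hu.eventually_ne_atTop 0] with y hy
  field_simp
  ring

end LogCoshAdd

section HalfAngle

open Real

lemma two_mul_sinh_half_sq (x : ℝ) : 2 * sinh (x / 2) ^ 2 = cosh x - 1 := by
  have h := cosh_two_mul (x / 2)
  rw [mul_div_cancel₀ x two_ne_zero, cosh_sq] at h
  linarith

lemma two_mul_sinh_half_mul_cosh_half (x : ℝ) :
    2 * sinh (x / 2) * cosh (x / 2) = sinh x := by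
  rw [← sinh_two_mul, mul_div_cancel₀ x two_ne_zero]

variable {p : ℝ}

lemma one_div_mul_two_mul_sinh_half_sq_add_two (hp : p ≠ 0) (x : ℝ) :
    1 / p * (2 * sinh (x / 2)) ^ 2 + 2 = 2 / p * (cosh x + (p - 1)) := by
  field_simp
  linear_combination two_mul_sinh_half_sq x

lemma four_mul_sinh_half_mul_cosh_half_div (hp : p ≠ 0) (x : ℝ) :
    4 * sinh (x / 2) * cosh (x / 2) / (4 / p * sinh (x / 2) ^ 2 + 2) =
      p * (sinh x / (cosh x + (p - 1))) := by
  have hnum : 4 * sinh (x / 2) * cosh (x / 2) = 2 * sinh x := by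
    linear_combination 2 * two_mul_sinh_half_mul_cosh_half x
  have hden : 4 / p * sinh (x / 2) ^ 2 + 2 = 2 / p * (cosh x + (p - 1)) := by
    rw [← one_div_mul_two_mul_sinh_half_sq_add_two hp]
    ring
  rw [hnum, hden]
  field_simp

lemma cosh_add_sub_one_pos (hp : 0 < p) (x : ℝ) : 0 < cosh x + (p - 1) := by
  linarith [one_le_cosh x]

lemma log_one_div_mul_two_mul_sinh_half_sq_add_two (hp : 0 < p) (x : ℝ) :
    log (1 / p * (2 * sinh (x / 2)) ^ 2 + 2) = log (2 / p) + log (cosh x + (p - 1)) := by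
  rw [one_div_mul_two_mul_sinh_half_sq_add_two hp.ne',
    log_mul (by positivity) (cosh_add_sub_one_pos hp x).ne']

end HalfAngle

theorem stmt_18_general (p : ℝ) (hp : 0 < p) (M : ℝ → ℝ)
    (hM : ∀ θ : ℝ, M θ =
      (p - 1) * Real.log ((1 / p) * (2 * Real.sinh (p * θ / 2)) ^ 2 + 2)) :
    (∀ θ : ℝ, deriv M θ =
      (p - 1) * (4 * Real.sinh (p * θ / 2) * Real.cosh (p * θ / 2)) /
        ((4 / p) * (Real.sinh (p * θ / 2)) ^ 2 + 2)) ∧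
    Tendsto (deriv M) atTop (nhds (p * (p - 1))) ∧
    Tendsto (deriv (deriv M)) atTop (nhds 0) := by
  have hM_eq : M = fun θ =>
      (p - 1) * (Real.log (2 / p) + Real.log (Real.cosh (p * θ) + (p - 1))) :=
    funext fun θ => by rw [hM, log_one_div_mul_two_mul_sinh_half_sq_add_two hp]
  have hne (θ : ℝ) : Real.cosh (p * θ) + (p - 1) ≠ 0 := (cosh_add_sub_one_pos hp _).ne'
  have hderiv : deriv M = fun θ =>
      p * (p - 1) * (Real.sinh (p * θ) / (Real.cosh (p * θ) + (p - 1))) := by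
    funext θ
    rw [hM_eq, deriv_const_mul_field, deriv_const_add, deriv_log_cosh_mul_add (hne θ)]
    ring
  have hderiv2 : deriv (deriv M) = fun θ => p ^ 2 * (p - 1) *
      ((1 + (p - 1) * Real.cosh (p * θ)) / (Real.cosh (p * θ) + (p - 1)) ^ 2) := by
    funext θ
    rw [hderiv, deriv_const_mul_field, deriv_sinh_mul_div_cosh_mul_add (hne θ)]
    ring
  have hscale : Tendsto (p * ·) atTop atTop := tendsto_id.const_mul_atTop hp
  refine ⟨fun θ => ?_, ?_, ?_⟩
  · rw [hderiv, mul_div_assoc, four_mul_sinh_half_mul_cosh_half_div hp.ne']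
    ring
  · rw [hderiv]
    simpa using ((tendsto_sinh_div_cosh_add_atTop (p - 1)).comp hscale).const_mul (p * (p - 1))
  · rw [hderiv2]
    simpa using
      ((tendsto_one_add_mul_cosh_div_sq_atTop (p - 1)).comp hscale).const_mul (p ^ 2 * (p - 1))

/-- For `M(θ) = (p-1) log((1/p)(2 sinh(pθ/2))² + 2)` (which equals `log |g|` up
to an additive constant in the exchangeable model), one has
`M'(θ) = (p-1)·4 sinh(pθ/2) cosh(pθ/2)/((4/p) sinh²(pθ/2) + 2)`, and as
`θ → ∞`, `M'(θ) → p(p-1)` and `M''(θ) → 0`. -/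
theorem stmt_18 (p : ℕ) (hp : 2 ≤ p)
    (M : ℝ → ℝ)
    (hM : ∀ θ : ℝ, M θ =
      ((p : ℝ) - 1) * Real.log ((1 / p) * (2 * Real.sinh ((p : ℝ) * θ / 2)) ^ 2 + 2)) :
    (∀ θ : ℝ, deriv M θ =
      ((p : ℝ) - 1) * (4 * Real.sinh ((p : ℝ) * θ / 2) * Real.cosh ((p : ℝ) * θ / 2)) /
        ((4 / p) * (Real.sinh ((p : ℝ) * θ / 2)) ^ 2 + 2)) ∧
    Tendsto (deriv M) atTop (nhds ((p : ℝ) * ((p : ℝ) - 1))) ∧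
    Tendsto (deriv (deriv M)) atTop (nhds 0) :=
  stmt_18_general p (Nat.cast_pos.2 (two_pos.trans_le hp)) M hM
end
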